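/- arXiv:1305.1675 — 2 statements merged into one kernel-verified Lean document; each statement's English description precedes it below -/
import Mathlib

section
/- Let G be a graph on n vertices that has a Hamiltonian path. Then there exists a strategy consisting of 2n rounds of matchings in G such that, after these rounds, every pair of agents is acquainted and, moreover, every agent has occupied every vertex of G at some point of the process. In particular, AC(G) ≤ 2n. -/
open scoped Classical

/-- A permutation of the vertices arising from swapping the agents along the edges of a
matching in `G`: every vertex is fixed, or is swapped with a neighbour. -/
def IsMatchingSwap {V : Type*} (G : SimpleGraph V) (σ : Equiv.Perm V) : Prop :=
  ∀ v : V, σ v = v ∨ (G.Adj v (σ v) ∧ σ (σ v) = v)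

/-- `positions σ i a` is the vertex occupied after `i` rounds by the agent that initially
occupies vertex `a`, when round `j` rearranges agents by the permutation `σ j`. -/
def positions {V : Type*} (σ : ℕ → Equiv.Perm V) : ℕ → V → V
  | 0 => id
  | (i + 1) => (σ i) ∘ positions σ i

/-- The agents starting at `a` and `b` become acquainted within the first `t` rounds:
at some time `i ≤ t` they occupy adjacent vertices of `G`. -/
def Acquainted {V : Type*} (G : SimpleGraph V) (σ : ℕ → Equiv.Perm V) (t : ℕ) (a b : V) : Prop :=
  ∃ i ≤ t, G.Adj (positions σ i a) (positions σ i b)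

/-- The acquaintance time `AC G`: the least number `t` of rounds for which there is a
strategy (a sequence of matchings, one per round, whose swaps move the agents) after which
every pair of distinct agents is acquainted. -/
noncomputable def AC {V : Type*} (G : SimpleGraph V) : ℕ :=
  sInf {t | ∃ σ : ℕ → Equiv.Perm V, (∀ i < t, IsMatchingSwap G (σ i)) ∧
    ∀ a b : V, a ≠ b → Acquainted G σ t a b}

/-- The helicopter acquaintance time `bAC G`: as `AC G`, but each round may rearrange the
agents by an arbitrary permutation of the vertices. -/
noncomputable def bAC {V : Type*} (G : SimpleGraph V) : ℕ :=
  sInf {t | ∃ σ : ℕ → Equiv.Perm V, ∀ a b : V, a ≠ b → Acquainted G σ t a b}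

/-!
Number the vertices along the Hamiltonian path by `0, …, n - 1` and, in round `i`, swap the agents
on every pair of positions `j, j + 1` with `j ≡ i` modulo `2`. Each agent then walks to one end of
the path, waits there for one round, and walks back. Folding a cycle of length `2n` onto the path
turns this into a uniform rotation: the agents occupy the even points of the cycle and advance by
one step per round. In `2n` rounds an agent goes once around the cycle, hence visits every vertex.
Two agents starting at `2p ≠ 2q` are adjacent after `2n - 1 - p - q` rounds: the sum of their places
on the cycle is then `-2`, and since the folding identifies `x` with `-1 - x`, one agent stands
where the other one moves in the next round.
-/

section Transfer

variable {V W : Type*} {G : SimpleGraph V} {H : SimpleGraph W}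

theorem IsMatchingSwap.permCongr {τ : Equiv.Perm V} (hτ : IsMatchingSwap G τ) (e : V ≃ W)
    (he : ∀ a b, G.Adj a b → H.Adj (e a) (e b)) : IsMatchingSwap H (e.permCongr τ) := by
  intro w
  simp only [Equiv.permCongr_apply, Equiv.symm_apply_apply]
  rcases hτ (e.symm w) with hfix | ⟨hadj, hinv⟩
  · exact .inl (by rw [hfix, e.apply_symm_apply])
  · exact .inr ⟨by simpa only [e.apply_symm_apply] using he _ _ hadj,
      by rw [hinv, e.apply_symm_apply]⟩

theorem positions_permCongr (σ : ℕ → Equiv.Perm V) (e : V ≃ W) (i : ℕ) (w : W) :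
    positions (fun k => e.permCongr (σ k)) i w = e (positions σ i (e.symm w)) := by
  induction i with
  | zero => exact (e.apply_symm_apply w).symm
  | succ i ih => simp only [positions, Function.comp_apply, ih, Equiv.permCongr_apply,
      Equiv.symm_apply_apply]

theorem Acquainted.permCongr {σ : ℕ → Equiv.Perm V} {t : ℕ} {e : V ≃ W} {a b : W}
    (hab : Acquainted G σ t (e.symm a) (e.symm b))
    (he : ∀ a b, G.Adj a b → H.Adj (e a) (e b)) :
    Acquainted H (fun k => e.permCongr (σ k)) t a b := by
  obtain ⟨i, hi, hadj⟩ := hab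
  exact ⟨i, hi, by simpa only [positions_permCongr] using he _ _ hadj⟩

end Transfer

section OddEvenSwap

variable {n : ℕ}

/-- The vertex of the path `0, …, n - 1` with which the odd-even transposition of round `i`
exchanges `j`: the pairs `j, j + 1` with `j ≡ i` modulo `2` are swapped, and an endpoint left
without partner is fixed (for `j = 0` through the truncated subtraction `0 - 1 = 0`). -/
def oddEvenPartner (i : ℕ) (j : Fin n) : Fin n :=
  if (j : ℕ) % 2 = i % 2 then (if h : (j : ℕ) + 1 < n then ⟨j + 1, h⟩ else j)
  else ⟨j - 1, by omega⟩

theorem val_oddEvenPartner (i : ℕ) (j : Fin n) :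
    (oddEvenPartner i j : ℕ) =
      if (j : ℕ) % 2 = i % 2 then (if (j : ℕ) + 1 < n then (j : ℕ) + 1 else j) else j - 1 := by
  unfold oddEvenPartner
  split_ifs <;> rfl

theorem oddEvenPartner_involutive (i : ℕ) : (oddEvenPartner (n := n) i).Involutive := by
  intro j
  ext
  simp only [val_oddEvenPartner]
  split_ifs <;> omega

/-- The odd-even transposition of round `i` as a permutation of the vertices of the path. -/
def oddEvenSwap (n i : ℕ) : Equiv.Perm (Fin n) :=
  (oddEvenPartner_involutive i).toPerm

theorem oddEvenSwap_apply (i : ℕ) (j : Fin n) : oddEvenSwap n i j = oddEvenPartner i j :=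
  rfl

theorem isMatchingSwap_oddEvenSwap (n i : ℕ) :
    IsMatchingSwap (SimpleGraph.pathGraph n) (oddEvenSwap n i) := by
  intro j
  by_cases hfix : oddEvenSwap n i j = j
  · exact .inl hfix
  · refine .inr ⟨?_, oddEvenPartner_involutive i j⟩
    rw [Fin.ext_iff, oddEvenSwap_apply, val_oddEvenPartner] at hfix
    rw [SimpleGraph.pathGraph_adj, oddEvenSwap_apply, val_oddEvenPartner]
    split_ifs at hfix ⊢ <;> omega

end OddEvenSwap

section Zigzag

variable {n : ℕ} [NeZero n]

/-- The folding of the cycle of length `2n` onto the path `0, …, n - 1`, precomposed with the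
projection of `ℕ` to the cycle: its successive values are `0, …, n - 1, n - 1, …, 0, 0, …`. -/
def zigzag (n : ℕ) [NeZero n] (c : ℕ) : Fin n :=
  ⟨min (c % (2 * n)) (2 * n - 1 - c % (2 * n)), by have := NeZero.pos n; omega⟩

theorem val_zigzag (c : ℕ) :
    (zigzag n c : ℕ) = min (c % (2 * n)) (2 * n - 1 - c % (2 * n)) :=
  rfl

theorem zigzag_congr {c d : ℕ} (h : c ≡ d [MOD 2 * n]) : zigzag n c = zigzag n d := by
  rw [Fin.ext_iff, val_zigzag, val_zigzag, h]

theorem zigzag_val (j : Fin n) : zigzag n j = j := by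
  ext
  have hmod : (j : ℕ) % (2 * n) = j := Nat.mod_eq_of_lt (by omega)
  rw [val_zigzag, hmod]
  omega

theorem zigzag_eq_zigzag_of_dvd {c d : ℕ} (h : 2 * n ∣ c + d + 1) : zigzag n c = zigzag n d := by
  have hc : c % (2 * n) < 2 * n := Nat.mod_lt _ (NeZero.pos _)
  have hd : d % (2 * n) < 2 * n := Nat.mod_lt _ (NeZero.pos _)
  have hdvd : 2 * n ∣ c % (2 * n) + d % (2 * n) + 1 :=
    ((((Nat.mod_modEq c _).add (Nat.mod_modEq d _)).add_right 1).dvd_iff dvd_rfl).2 h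
  have hsum : c % (2 * n) + d % (2 * n) + 1 = 2 * n :=
    Nat.eq_of_dvd_of_lt_two_mul (by omega) hdvd (by omega)
  ext
  rw [val_zigzag, val_zigzag]
  omega

theorem pathGraph_adj_zigzag_succ {c : ℕ} (h : ¬ n ∣ c + 1) :
    (SimpleGraph.pathGraph n).Adj (zigzag n c) (zigzag n (c + 1)) := by
  have hc : c % (2 * n) < 2 * n := Nat.mod_lt _ (NeZero.pos _)
  have hdvd : ¬ n ∣ c % (2 * n) + 1 := fun hn =>
    h ((((Nat.mod_modEq c _).of_mul_left 2 |>.add_right 1).dvd_iff dvd_rfl).1 hn)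
  have hne : c % (2 * n) + 1 ≠ n := fun heq => hdvd heq.symm.dvd
  have hne' : c % (2 * n) + 1 ≠ 2 * n := fun heq => hdvd (Dvd.intro_left 2 heq.symm)
  have hsucc : (c + 1) % (2 * n) = c % (2 * n) + 1 := by
    rw [← Nat.mod_add_mod, Nat.mod_eq_of_lt (by omega)]
  rw [SimpleGraph.pathGraph_adj, val_zigzag, val_zigzag, hsucc]
  omega

theorem oddEvenSwap_zigzag {i c : ℕ} (h : c ≡ i [MOD 2]) :
    oddEvenSwap n i (zigzag n c) = zigzag n (c + 1) := by
  have hc : c % (2 * n) < 2 * n := Nat.mod_lt _ (NeZero.pos _)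
  have hparity : c % (2 * n) % 2 = i % 2 := (Nat.mod_mul_right_mod c 2 n).trans h
  have hsucc : (c + 1) % (2 * n) =
      if c % (2 * n) + 1 = 2 * n then 0 else c % (2 * n) + 1 := by
    rw [← Nat.mod_add_mod]
    split_ifs with hlast
    · rw [hlast, Nat.mod_self]
    · exact Nat.mod_eq_of_lt (by omega)
  ext
  rw [oddEvenSwap_apply, val_oddEvenPartner, val_zigzag, val_zigzag, hsucc]
  split_ifs <;> omega

theorem exists_zigzag_two_mul_eq (j : Fin n) : ∃ p < n, zigzag n (2 * p) = j := by
  rcases Nat.even_or_odd' (j : ℕ) with ⟨k, hk | hk⟩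
  · exact ⟨k, by omega, by rw [← hk, zigzag_val]⟩
  · refine ⟨n - 1 - k, by omega, ?_⟩
    rw [← zigzag_val j]
    exact zigzag_eq_zigzag_of_dvd ⟨1, by omega⟩

theorem positions_oddEvenSwap_zigzag (p i : ℕ) :
    positions (oddEvenSwap n) i (zigzag n (2 * p)) = zigzag n (2 * p + i) := by
  induction i with
  | zero => rfl
  | succ i ih =>
    simp only [positions, Function.comp_apply, ih]
    exact oddEvenSwap_zigzag (Nat.mul_add_mod 2 p i)

theorem acquainted_oddEvenSwap {a b : Fin n} (hab : a ≠ b) :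
    Acquainted (SimpleGraph.pathGraph n) (oddEvenSwap n) (2 * n) a b := by
  obtain ⟨p, hp, rfl⟩ := exists_zigzag_two_mul_eq a
  obtain ⟨q, hq, rfl⟩ := exists_zigzag_two_mul_eq b
  have hpq : p ≠ q := fun h => hab (h ▸ rfl)
  refine ⟨2 * n - 1 - p - q, by omega, ?_⟩
  rw [positions_oddEvenSwap_zigzag, positions_oddEvenSwap_zigzag]
  have hreflect : zigzag n (2 * q + (2 * n - 1 - p - q)) =
      zigzag n (2 * p + (2 * n - 1 - p - q) + 1) :=
    zigzag_eq_zigzag_of_dvd ⟨2, by omega⟩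
  rw [hreflect]
  refine pathGraph_adj_zigzag_succ fun hdvd => hpq ?_
  have hmod : q + (2 * p + (2 * n - 1 - p - q) + 1) ≡ p [MOD n] := by
    rw [show q + (2 * p + (2 * n - 1 - p - q) + 1) = p + n * 2 by omega]
    exact Nat.add_mul_mod_self_left ..
  exact (hmod.symm.trans ((Nat.modEq_zero_iff_dvd.2 hdvd).add_left q)).eq_of_lt_of_lt hp hq

theorem exists_positions_oddEvenSwap_eq (a b : Fin n) :
    ∃ i < 2 * n, positions (oddEvenSwap n) i a = b := by
  obtain ⟨p, hp, rfl⟩ := exists_zigzag_two_mul_eq a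
  refine ⟨(b + (2 * n - 2 * p)) % (2 * n), Nat.mod_lt _ (NeZero.pos _), ?_⟩
  rw [positions_oddEvenSwap_zigzag]
  calc zigzag n (2 * p + (b + (2 * n - 2 * p)) % (2 * n))
      = zigzag n (2 * p + (b + (2 * n - 2 * p))) := zigzag_congr ((Nat.mod_modEq _ _).add_left _)
    _ = zigzag n (b + 2 * n) := by congr 1; omega
    _ = zigzag n b := zigzag_congr (Nat.add_mod_right _ _)
    _ = b := zigzag_val b

end Zigzag

/-- If a graph `G` on `n` vertices has a Hamiltonian path, then there is a strategy of
`2n` rounds of matchings after which every pair of agents is acquainted and, moreover,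
every agent has occupied every vertex at some point; in particular `AC(G) ≤ 2n`. -/
theorem acquaintance_of_hamiltonian_path {V : Type*} [Fintype V] (G : SimpleGraph V)
    (h : ∃ (u v : V) (P : G.Walk u v), P.IsPath ∧ P.IsHamiltonian) :
    (∃ σ : ℕ → Equiv.Perm V,
      (∀ i < 2 * Fintype.card V, IsMatchingSwap G (σ i)) ∧
      (∀ a b : V, a ≠ b → Acquainted G σ (2 * Fintype.card V) a b) ∧
      (∀ a v : V, ∃ i ≤ 2 * Fintype.card V, positions σ i a = v)) ∧
    AC G ≤ 2 * Fintype.card V := by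
  obtain ⟨u, v, P, -, hP⟩ := h
  have hcard : P.length + 1 = Fintype.card V := P.length_support.symm.trans hP.length_support
  have hbij : Function.Bijective P.pathGraphHom :=
    (SimpleGraph.Walk.isHamiltonian_iff_support_get_bijective.1 hP).comp
      (finCongr P.length_support.symm).bijective
  let e : Fin (P.length + 1) ≃ V := .ofBijective _ hbij
  have he : ∀ a b, (SimpleGraph.pathGraph _).Adj a b → G.Adj (e a) (e b) :=
    fun _ _ => P.pathGraphHom.map_adj
  let σ : ℕ → Equiv.Perm V := fun i => e.permCongr (oddEvenSwap _ i)
  have hmatching (i : ℕ) : IsMatchingSwap G (σ i) :=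
    (isMatchingSwap_oddEvenSwap _ i).permCongr e he
  have hacq (a b : V) (hab : a ≠ b) : Acquainted G σ (2 * Fintype.card V) a b :=
    hcard ▸ (acquainted_oddEvenSwap (e.symm.injective.ne hab)).permCongr he
  have hvisit (a v : V) : ∃ i ≤ 2 * Fintype.card V, positions σ i a = v := by
    obtain ⟨i, hi, hpos⟩ := exists_positions_oddEvenSwap_eq (e.symm a) (e.symm v)
    exact ⟨i, hcard ▸ hi.le, by rw [positions_permCongr, hpos, e.apply_symm_apply]⟩
  exact ⟨⟨σ, fun i _ => hmatching i, hacq, hvisit⟩, Nat.sInf_le ⟨σ, fun i _ => hmatching i, hacq⟩⟩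
end

section
/- There exists a constant C > 0 such that the following holds. If p = p(n) satisfies p(n)·n − log n − log log n → ∞ as n → ∞ and p(n) ≤ 1 for all n, then the probability that a random graph G ∈ G(n,p(n)) is connected and satisfies AC(G) ≤ C log n / p(n) tends to 1 as n → ∞. -/
open scoped Classical

/-- The probability, under the binomial random graph model `G(n,p)` on vertex set
`{1, …, n}`, of the event `A`. -/
noncomputable def gnpProb (n : ℕ) (p : ℝ) (A : SimpleGraph (Fin n) → Prop) : ℝ :=
  ∑ G : SimpleGraph (Fin n),
    if A G then p ^ G.edgeSet.ncard * (1 - p) ^ (n.choose 2 - G.edgeSet.ncard) else 0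

/-!
Sprinkling: `G(n, p)` is the union of independent copies of `G(n, a)` and `G(n, b)` with `a n`
constant. Depth-first search in the first graph finds a path `P` through three quarters of the
vertices. Odd-even transposition rounds along `P` make the agents on it circulate: within `2 |P|`
rounds every two of them meet, each of them visits every place of `P`, and all return home.

The places off `P` are at most half as many as those on `P`, so every pair of agents meets if we let
the agents on `P` circulate three times, each time with other agents off `P`. To exchange agents in
between, exchange two partners as soon as the circulation makes them adjacent, and let each play
the role of the other from then on. This needs edges between `P` and the other vertices, which the
second graph provides.

* If `b n` is of order `log n`, then almost all vertices off `P` have a neighbour on `P`, and the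
  remaining ones are matched to vertices that do; one extra round swaps the two kinds.
* If `b n` is much larger than `log n`, then already `O(log n / b)` rounds of circulation let every
  agent on `P` meet everyone else: two agents occupy that many different pairs of places, each of
  which is an edge of the second graph with probability `b`.
-/

open Finset SimpleGraph

section RandomGraph

open MeasureTheory ProbabilityTheory unitInterval

variable {V : Type*} [Finite V]

instance : DiscreteMeasurableSpace (SimpleGraph V) where
  forall_measurableSet s := by
    rw [← s.preimage_image_eq edgeSet_injective]
    exact measurable_edgeSet (Set.toFinite _).measurableSet

theorem gnpProb_eq_binomialRandom_real (n : ℕ) (p : I) (A : SimpleGraph (Fin n) → Prop) :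
    gnpProb n p A = G(Fin n, p).real {G | A G} := by
  have hset : {G | A G} = ((univ.filter A : Finset (SimpleGraph (Fin n))) : Set _) := by simp
  rw [hset, ← sum_measureReal_singleton, Finset.sum_filter]
  exact Finset.sum_congr rfl fun G _ ↦ by simp [measureReal_def]

theorem binomialRandom_real_disjoint_edgeSet (p : I) {N : Finset (Sym2 V)}
    (hN : ∀ e ∈ N, ¬e.IsDiag) :
    G(V, p).real {G | Disjoint ↑N G.edgeSet} = (1 - p : ℝ) ^ #N := by
  have hpre : (fun f : Sym2 V → Prop ↦ {e | f e}) ⁻¹'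
      (fromEdgeSet ⁻¹' {G | Disjoint (N : Set (Sym2 V)) G.edgeSet}) =
      Set.pi N fun _ ↦ {False} := by
    ext f
    simp only [Set.mem_preimage, Set.mem_ofPred_eq, edgeSet_fromEdgeSet, Set.disjoint_left,
      Set.mem_pi, SetLike.mem_coe, Set.mem_singleton_iff]
    exact forall₂_congr fun e he ↦ by simp [hN e he]
  rw [measureReal_def, binomialRandom_eq_map, setBernoulli_eq_map,
    Measure.map_apply (by fun_prop) (.of_discrete), Measure.map_apply (by fun_prop) (.of_discrete),
    hpre, Measure.infinitePi_pi _ (by simp), Finset.prod_congr rfl fun e he ↦ by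
      rw [show (e ∈ (Sym2.diagSet : Set (Sym2 V))ᶜ) = True by simpa using hN e he]]
  simp

theorem binomialRandom_real_cylinder (p : I) {D N : Finset (Sym2 V)}
    (hD : ∀ e ∈ D, ¬e.IsDiag) (hN : ∀ e ∈ N, ¬e.IsDiag) (hDN : Disjoint D N) :
    G(V, p).real {G | ↑D ⊆ G.edgeSet ∧ Disjoint ↑N G.edgeSet} = p ^ #D * (1 - p : ℝ) ^ #N := by
  induction D using Finset.induction_on generalizing N with
  | empty => simpa using binomialRandom_real_disjoint_edgeSet p hN
  | insert e D he ih =>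
    simp only [mem_insert, forall_eq_or_imp, disjoint_insert_left] at hD hDN
    have hsplit : {G : SimpleGraph V | ↑(insert e D) ⊆ G.edgeSet ∧ Disjoint ↑N G.edgeSet} =
        {G | ↑D ⊆ G.edgeSet ∧ Disjoint ↑N G.edgeSet} \
          {G | ↑D ⊆ G.edgeSet ∧ Disjoint ↑(insert e N) G.edgeSet} := by
      ext G
      simp only [coe_insert, Set.insert_subset_iff, Set.mem_ofPred_eq, Set.disjoint_insert_left,
        Set.mem_sdiff, not_and]
      tauto
    have hsub : {G : SimpleGraph V | ↑D ⊆ G.edgeSet ∧ Disjoint ↑(insert e N) G.edgeSet} ⊆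
        {G | ↑D ⊆ G.edgeSet ∧ Disjoint ↑N G.edgeSet} :=
      fun G hG ↦ ⟨hG.1, hG.2.mono_left (by simp)⟩
    rw [hsplit, measureReal_sdiff hsub .of_discrete, ih hD.2 hN hDN.2,
      ih hD.2 (by simpa using ⟨hD.1, hN⟩) (by simpa using ⟨he, hDN.2⟩),
      card_insert_of_notMem he, card_insert_of_notMem hDN.1]
    ring

theorem exists_binomialRandom_real_Iic (K : SimpleGraph V) :
    ∃ k : ℕ, ∀ p : I, G(V, p).real (Set.Iic K) = (1 - p : ℝ) ^ k := by
  cases nonempty_fintype V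
  refine ⟨#Kᶜ.edgeFinset, fun p ↦ ?_⟩
  rw [← binomialRandom_real_disjoint_edgeSet p fun e he ↦
    not_isDiag_of_mem_edgeFinset he, coe_edgeFinset]
  congr! 1
  ext G
  simp [disjoint_edgeSet, disjoint_compl_left_iff]

theorem generateFrom_range_Iic {α : Type*} [Finite α] [PartialOrder α] [MeasurableSpace α]
    [DiscreteMeasurableSpace α] :
    MeasurableSpace.generateFrom (Set.range (Set.Iic : α → Set α)) = ‹MeasurableSpace α› := by
  refine le_antisymm (MeasurableSpace.generateFrom_le fun s _ ↦ .of_discrete) fun s _ ↦ ?_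
  have hIic (K : α) : MeasurableSet[.generateFrom (.range (Set.Iic : α → Set α))] (Set.Iic K) :=
    MeasurableSpace.measurableSet_generateFrom ⟨K, rfl⟩
  rw [← Set.biUnion_of_singleton s]
  refine .biUnion s.to_countable fun K _ ↦ ?_
  have hK : {K} = Set.Iic K \ ⋃ L ∈ Set.Iio K, Set.Iic L := by
    ext L
    simpa [-not_lt] using ⟨by grind, fun h ↦ h.1.eq_of_not_lt fun hlt ↦ h.2 L hlt le_rfl⟩
  exact hK ▸ (hIic K).diff (.biUnion (Set.to_countable _) fun L _ ↦ hIic L)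

theorem map_sup_binomialRandom {a b p : I} (h : (1 - p : ℝ) = (1 - a) * (1 - b)) :
    (G(V, a).prod G(V, b)).map (fun x ↦ x.1 ⊔ x.2) = G(V, p) := by
  have : IsProbabilityMeasure ((G(V, a).prod G(V, b)).map fun x ↦ x.1 ⊔ x.2) :=
    Measure.isProbabilityMeasure_map (measurable_of_countable _).aemeasurable
  refine ext_of_generate_finite (Set.range Set.Iic) generateFrom_range_Iic.symm ?_ ?_ (by simp)
  · rintro _ ⟨K, rfl⟩ _ ⟨L, rfl⟩ -
    exact ⟨K ⊓ L, Set.Iic_inter_Iic.symm⟩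
  · rintro _ ⟨K, rfl⟩
    have hpre : (fun x : SimpleGraph V × SimpleGraph V ↦ x.1 ⊔ x.2) ⁻¹' Set.Iic K =
        Set.Iic K ×ˢ Set.Iic K := by
      ext; simp [Prod.le_def]
    obtain ⟨k, hk⟩ := exists_binomialRandom_real_Iic K
    rw [Measure.map_apply (measurable_of_countable _) .of_discrete, hpre, Measure.prod_prod,
      ← ENNReal.toReal_eq_toReal_iff' (by finiteness) (by finiteness), ENNReal.toReal_mul]
    simp only [← measureReal_def, hk, h, mul_pow]

theorem binomialRandom_real_compl_le_of_sprinkling {a b p : I}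
    (h : (1 - p : ℝ) = (1 - a) * (1 - b)) {A Q : Set (SimpleGraph V)} {δ : ℝ} (hδ : 0 ≤ δ)
    (hQ : ∀ G ∈ Q, G(V, b).real {H | G ⊔ H ∉ A} ≤ δ) :
    G(V, p).real Aᶜ ≤ G(V, a).real Qᶜ + δ := by
  have hfiber (G : SimpleGraph V) : G(V, b).real {H | G ⊔ H ∉ A} ≤ Qᶜ.indicator 1 G + δ := by
    by_cases hG : G ∈ Q
    · simpa [hG] using hQ G hG
    · simpa [hG] using measureReal_le_one.trans (le_add_of_nonneg_right hδ)
  rw [← map_sup_binomialRandom h, map_measureReal_apply (measurable_of_countable _) .of_discrete,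
    ← integral_indicator_one .of_discrete, integral_prod _ .of_finite]
  calc ∫ G, ∫ H, ((fun x : SimpleGraph V × SimpleGraph V ↦ x.1 ⊔ x.2) ⁻¹' Aᶜ).indicator 1 (G, H)
        ∂G(V, b) ∂G(V, a)
    _ = ∫ G, G(V, b).real {H | G ⊔ H ∉ A} ∂G(V, a) :=
        integral_congr_ae (.of_forall fun G ↦ integral_indicator_one .of_discrete)
    _ ≤ ∫ G, (Qᶜ.indicator 1 G + δ) ∂G(V, a) := integral_mono .of_finite .of_finite hfiber
    _ = G(V, a).real Qᶜ + δ := by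
        rw [integral_add .of_finite .of_finite, integral_indicator_one .of_discrete]
        simp

end RandomGraph

section LongPath

variable {V : Type*} {G : SimpleGraph V}

/-- The path traced by a duplicate-free list of consecutively adjacent vertices, as a copy of a path
graph. -/
def pathCopyOfChain (L : List V) (hL : L.Nodup) (hchain : L.IsChain G.Adj) :
    (pathGraph L.length).Copy G where
  toHom := ⟨L.get, fun {i j} hij ↦ by
    rcases pathGraph_adj.1 hij with h | h
    · simpa [← h] using hchain.getElem i.1 (by lia)
    · simpa [← h] using (hchain.getElem j.1 (by lia)).symm⟩
  injective' := hL.injective_get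

/-- A snapshot of depth-first search: `S` holds the vertices abandoned for good and `L` is the
stack; the remaining vertices have not been visited. -/
structure IsDFSState (G : SimpleGraph V) (S : Finset V) (L : List V) : Prop where
  nodup : L.Nodup
  isChain : L.IsChain G.Adj
  notMem : ∀ x ∈ L, x ∉ S
  not_adj : ∀ x ∈ S, ∀ y ∉ S, y ∉ L → ¬G.Adj x y

namespace IsDFSState

variable {S : Finset V} {L : List V} {x : V}

theorem push (h : IsDFSState G S L) (hchain : (x :: L).IsChain G.Adj) (hxS : x ∉ S)
    (hxL : x ∉ L) : IsDFSState G S (x :: L) where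
  nodup := List.nodup_cons.2 ⟨hxL, h.nodup⟩
  isChain := hchain
  notMem := List.forall_mem_cons.2 ⟨hxS, h.notMem⟩
  not_adj y hy z hz hzL := h.not_adj y hy z hz fun hmem ↦ hzL (List.mem_cons_of_mem _ hmem)

theorem pop (h : IsDFSState G S (x :: L)) (hx : ∀ y ∉ S, y ∉ x :: L → ¬G.Adj x y) :
    IsDFSState G (insert x S) L where
  nodup := h.nodup.of_cons
  isChain := h.isChain.tail
  notMem y hy := by
    have := h.notMem y (List.mem_cons_of_mem _ hy)
    have := (List.nodup_cons.1 h.nodup).1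
    grind
  not_adj y hy z hz hzL := by
    have := h.not_adj y
    grind

variable [Fintype V]

theorem exists_two_mul_card_add_length_eq (G : SimpleGraph V) {j : ℕ} (hj : j ≤ Fintype.card V) :
    ∃ S L, IsDFSState G S L ∧ 2 * #S + L.length = j := by
  induction j with
  | zero => exact ⟨∅, [], ⟨by simp, by simp, by simp, by simp⟩, rfl⟩
  | succ j ih =>
    obtain ⟨S, L, h, hcard⟩ := ih (by lia)
    by_cases hpush : ∃ x, x ∉ S ∧ x ∉ L ∧ (x :: L).IsChain G.Adj
    · obtain ⟨x, hxS, hxL, hchain⟩ := hpush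
      exact ⟨S, x :: L, h.push hchain hxS hxL, by simp; lia⟩
    cases L with
    | nil =>
      obtain ⟨x, hx⟩ : ∃ x, x ∉ S := by
        by_contra! hall
        rw [eq_univ_iff_forall.2 hall, card_univ, List.length_nil] at hcard
        lia
      exact absurd ⟨x, hx, by simp, by simp⟩ hpush
    | cons y L =>
      refine ⟨insert y S, L, h.pop fun x hxS hxL hyx ↦ hpush ⟨x, hxS, hxL, ?_⟩, ?_⟩
      · exact List.isChain_cons_cons.2 ⟨hyx.symm, h.isChain⟩
      · rw [card_insert_of_notMem (h.notMem y (by simp))]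
        simp only [List.length_cons] at hcard
        lia

end IsDFSState

/-- Stop the search when as many vertices have been abandoned as are still unvisited. -/
theorem exists_pathGraph_copy [Fintype V] {k : ℕ}
    (hG : ∀ X Y : Finset V, Disjoint X Y → #X = k → #Y = k → ∃ x ∈ X, ∃ y ∈ Y, G.Adj x y) :
    ∃ m, Nonempty ((pathGraph m).Copy G) ∧ Fintype.card V ≤ m + 2 * k := by
  obtain ⟨S, L, h, hcard⟩ := IsDFSState.exists_two_mul_card_add_length_eq G le_rfl
  refine ⟨L.length, ⟨pathCopyOfChain L h.nodup h.isChain⟩, ?_⟩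
  by_contra! hlt
  have hdisj : Disjoint S L.toFinset :=
    Finset.disjoint_left.2 fun x hxS hxL ↦ h.notMem x (List.mem_toFinset.1 hxL) hxS
  have hT : #(S ∪ L.toFinset)ᶜ = #S := by
    rw [card_compl, card_union_of_disjoint hdisj, List.toFinset_card_of_nodup h.nodup]
    lia
  obtain ⟨X, hX, hXcard⟩ := exists_subset_card_eq (s := S) (n := k) (by lia)
  obtain ⟨Y, hY, hYcard⟩ := exists_subset_card_eq (s := (S ∪ L.toFinset)ᶜ) (n := k) (by lia)
  have hXY : Disjoint X Y := disjoint_compl_right.mono (hX.trans subset_union_left) hY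
  obtain ⟨x, hx, y, hy, hxy⟩ := hG X Y hXY hXcard hYcard
  have hyT := hY hy
  simp only [mem_compl, mem_union, List.mem_toFinset, not_or] at hyT
  exact h.not_adj x (hX hx) y hyT.1 hyT.2 hxy

end LongPath

section Strategy

variable {V : Type*} {G : SimpleGraph V}

theorem IsMatchingSwap.reachable {τ : Equiv.Perm V} (hτ : IsMatchingSwap G τ) (v : V) :
    G.Reachable v (τ v) := by
  rcases hτ v with h | ⟨h, -⟩
  · rw [h]
  · exact h.reachable

/-- The arrangement of the agents after `t` rounds, i.e. `positions σ t` as a permutation. -/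
def configuration (σ : ℕ → Equiv.Perm V) : ℕ → Equiv.Perm V
  | 0 => 1
  | t + 1 => σ t * configuration σ t

theorem coe_configuration (σ : ℕ → Equiv.Perm V) (t : ℕ) :
    ⇑(configuration σ t) = positions σ t := by
  induction t with
  | zero => rfl
  | succ t ih => simp [configuration, positions, ih]

theorem acquainted_comm {σ : ℕ → Equiv.Perm V} {t : ℕ} {a b : V} :
    Acquainted G σ t a b ↔ Acquainted G σ t b a := by
  simp only [Acquainted, G.adj_comm]

/-- Some strategy of `t` rounds takes the agents from their initial places to the arrangement `π`
and lets all pairs of agents related by `M` meet on the way. -/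
def HasStrategy (G : SimpleGraph V) (t : ℕ) (π : Equiv.Perm V) (M : V → V → Prop) : Prop :=
  ∃ σ : ℕ → Equiv.Perm V, (∀ i < t, IsMatchingSwap G (σ i)) ∧ configuration σ t = π ∧
    ∀ a b, M a b → Acquainted G σ t a b

theorem IsMatchingSwap.hasStrategy {τ : Equiv.Perm V} (hτ : IsMatchingSwap G τ) :
    HasStrategy G 1 τ ⊥ :=
  ⟨fun _ ↦ τ, fun _ _ ↦ hτ, mul_one τ, fun _ _ h ↦ h.elim⟩

/-- Follow `σ` for `t` rounds and `σ'` from then on. -/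
def concat (σ σ' : ℕ → Equiv.Perm V) (t i : ℕ) : Equiv.Perm V :=
  if i < t then σ i else σ' (i - t)

theorem configuration_concat_of_le (σ σ' : ℕ → Equiv.Perm V) {t i : ℕ} (hi : i ≤ t) :
    configuration (concat σ σ' t) i = configuration σ i := by
  induction i with
  | zero => rfl
  | succ i ih => rw [configuration, configuration, ih (by lia), concat, if_pos (by lia)]

theorem configuration_concat_add (σ σ' : ℕ → Equiv.Perm V) (t i : ℕ) :
    configuration (concat σ σ' t) (t + i) = configuration σ' i * configuration σ t := by
  induction i with
  | zero => rw [add_zero, configuration_concat_of_le σ σ' le_rfl, configuration, one_mul]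
  | succ i ih =>
    rw [← add_assoc, configuration, ih, concat, if_neg (by lia), Nat.add_sub_cancel_left,
      configuration, mul_assoc]

namespace HasStrategy

variable {s t : ℕ} {π ρ : Equiv.Perm V} {M N : V → V → Prop}

theorem zero : HasStrategy G 0 1 ⊥ :=
  ⟨1, fun _ hi ↦ absurd hi (Nat.not_lt_zero _), rfl, fun _ _ h ↦ h.elim⟩

theorem mono (h : HasStrategy G t π M) (hNM : ∀ a b, N a b → M a b) : HasStrategy G t π N := by
  obtain ⟨σ, hσ, hπ, hM⟩ := h
  exact ⟨σ, hσ, hπ, fun a b hab ↦ hM a b (hNM a b hab)⟩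

theorem symm (h : HasStrategy G t π M) : HasStrategy G t π fun a b ↦ M a b ∨ M b a := by
  obtain ⟨σ, hσ, hπ, hM⟩ := h
  exact ⟨σ, hσ, hπ, fun a b hab ↦ hab.elim (hM a b) fun hba ↦ acquainted_comm.1 (hM b a hba)⟩

theorem comp (h₁ : HasStrategy G s π M) (h₂ : HasStrategy G t ρ N) :
    HasStrategy G (s + t) (ρ * π) fun a b ↦ M a b ∨ N (π a) (π b) := by
  obtain ⟨σ, hσ, rfl, hM⟩ := h₁
  obtain ⟨σ', hσ', rfl, hN⟩ := h₂
  refine ⟨concat σ σ' s, fun i hi ↦ ?_, configuration_concat_add σ σ' s t, ?_⟩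
  · unfold concat
    split_ifs with his
    · exact hσ i his
    · exact hσ' _ (by lia)
  · rintro a b (hab | hab)
    · obtain ⟨i, hi, hadj⟩ := hM a b hab
      refine ⟨i, by lia, ?_⟩
      rwa [← coe_configuration, configuration_concat_of_le σ σ' hi, coe_configuration]
    · obtain ⟨i, hi, hadj⟩ := hN _ _ hab
      refine ⟨s + i, by lia, ?_⟩
      rwa [← coe_configuration, configuration_concat_add, Equiv.Perm.coe_mul, coe_configuration]

theorem trans (h₁ : HasStrategy G s π ⊥) (h₂ : HasStrategy G t ρ ⊥) :
    HasStrategy G (s + t) (ρ * π) ⊥ :=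
  (h₁.comp h₂).mono fun _ _ h ↦ h.elim

theorem AC_le (h : HasStrategy G t π M) (hM : ∀ a b, a ≠ b → M a b) : AC G ≤ t := by
  obtain ⟨σ, hσ, -, hmeet⟩ := h
  exact Nat.sInf_le ⟨σ, hσ, fun a b hab ↦ hmeet a b (hM a b hab)⟩

/-- Agents never leave their connected component. -/
theorem connected [Nonempty V] (h : HasStrategy G t π M) (hM : ∀ a b, a ≠ b → M a b) :
    G.Connected := by
  obtain ⟨σ, hσ, -, hmeet⟩ := h
  have hreach (a : V) (i : ℕ) (hi : i ≤ t) : G.Reachable a (positions σ i a) := by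
    induction i with
    | zero => rfl
    | succ i ih => exact (ih (by lia)).trans ((hσ i (by lia)).reachable _)
  refine connected_iff G |>.2 ⟨fun a b ↦ ?_, ‹_›⟩
  obtain rfl | hab := eq_or_ne a b
  · rfl
  · obtain ⟨i, hi, hadj⟩ := hmeet a b (hM a b hab)
    exact (hreach a i hi).trans (hadj.reachable.trans (hreach b i hi).symm)

end HasStrategy

end Strategy

section Interleaving

open Function

variable {V : Type*} {G : SimpleGraph V}

/-- The permutation acting as the involution `α` on the invariant set `J`, and trivially
elsewhere. -/
noncomputable def restrictInvolution {α : Equiv.Perm V} (hα : Involutive α) (J : Set V)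
    (hJ : ∀ x ∈ J, α x ∈ J) : Equiv.Perm V :=
  Involutive.toPerm (J.piecewise α id) fun x ↦ by
    by_cases hx : x ∈ J
    · simp [hx, hJ x hx, hα x]
    · simp [hx]

section RestrictInvolution

variable {α : Equiv.Perm V} (hα : Involutive α) {J K : Set V} {x : V}

theorem restrictInvolution_of_mem (hJ : ∀ x ∈ J, α x ∈ J) (hx : x ∈ J) :
    restrictInvolution hα J hJ x = α x :=
  Set.piecewise_eq_of_mem J α id hx

theorem restrictInvolution_of_notMem (hJ : ∀ x ∈ J, α x ∈ J) (hx : x ∉ J) :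
    restrictInvolution hα J hJ x = x :=
  Set.piecewise_eq_of_notMem J α id hx

theorem restrictInvolution_eq_mul (hJ : ∀ x ∈ J, α x ∈ J) (hK : ∀ x ∈ K, α x ∈ K) (hJK : J ⊆ K) :
    ∃ hdiff : ∀ x ∈ K \ J, α x ∈ K \ J, restrictInvolution hα K hK =
      restrictInvolution hα (K \ J) hdiff * restrictInvolution hα J hJ := by
  have hdiff : ∀ x ∈ K \ J, α x ∈ K \ J :=
    fun x hx ↦ ⟨hK x hx.1, fun h ↦ hx.2 (hα x ▸ hJ _ h)⟩
  refine ⟨hdiff, Equiv.ext fun x ↦ ?_⟩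
  rw [Equiv.Perm.mul_apply]
  by_cases hx : x ∈ J
  · rw [restrictInvolution_of_mem hα hJ hx, restrictInvolution_of_mem hα hK (hJK hx),
      restrictInvolution_of_notMem hα hdiff fun h ↦ h.2 (hJ x hx)]
  rw [restrictInvolution_of_notMem hα hJ hx]
  by_cases hxK : x ∈ K
  · rw [restrictInvolution_of_mem hα hK hxK, restrictInvolution_of_mem hα hdiff ⟨hxK, hx⟩]
  · rw [restrictInvolution_of_notMem hα hK hxK,
      restrictInvolution_of_notMem hα hdiff fun h ↦ hxK h.1]

theorem IsMatchingSwap.conj_restrictInvolution (hJ : ∀ x ∈ J, α x ∈ J) {c : Equiv.Perm V}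
    (hadj : ∀ x ∈ J, G.Adj (c x) (c (α x))) :
    IsMatchingSwap G (c * restrictInvolution hα J hJ * c⁻¹) := by
  refine c.surjective.forall.2 fun x ↦ ?_
  simp only [Equiv.Perm.mul_apply, Equiv.Perm.inv_def, Equiv.symm_apply_apply]
  by_cases hx : x ∈ J
  · rw [restrictInvolution_of_mem hα hJ hx, restrictInvolution_of_mem hα hJ (hJ x hx), hα x]
    exact .inr ⟨hadj x hx, rfl⟩
  · rw [restrictInvolution_of_notMem hα hJ hx]
    exact .inl rfl

end RestrictInvolution

/-- The points whose agents meet the agents of their `α`-partners before round `t`. -/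
def metBefore (G : SimpleGraph V) (σ : ℕ → Equiv.Perm V) (α : Equiv.Perm V) (t : ℕ) : Set V :=
  {x | ∃ i < t, G.Adj (configuration σ i x) (configuration σ i (α x))}

theorem apply_mem_metBefore {σ : ℕ → Equiv.Perm V} {α : Equiv.Perm V} (hα : Involutive α) {t : ℕ} :
    ∀ x ∈ metBefore G σ α t, α x ∈ metBefore G σ α t :=
  fun x ⟨i, hi, hadj⟩ ↦ ⟨i, hi, by simpa [hα x] using hadj.symm⟩

/-- The involution `α` restricted to the pairs of partners who meet before round `t`. The
configurations `configuration σ t * exchangeMet G σ hα t` interpolate between those of `σ` and those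
in which `α` has been applied beforehand. -/
noncomputable def exchangeMet (G : SimpleGraph V) (σ : ℕ → Equiv.Perm V) {α : Equiv.Perm V}
    (hα : Involutive α) (t : ℕ) : Equiv.Perm V :=
  restrictInvolution hα (metBefore G σ α t) (apply_mem_metBefore hα)

theorem exchangeMet_zero (σ : ℕ → Equiv.Perm V) {α : Equiv.Perm V} (hα : Involutive α) :
    exchangeMet G σ hα 0 = 1 :=
  Equiv.ext fun _ ↦ restrictInvolution_of_notMem hα _ fun ⟨_, hi, _⟩ ↦ Nat.not_lt_zero _ hi

/-- The partners who meet at time `t` for the first time can be exchanged at once, and the exchange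
commutes with whatever happens afterwards. -/
theorem isMatchingSwap_exchangeMet (σ : ℕ → Equiv.Perm V) {α : Equiv.Perm V} (hα : Involutive α)
    (t : ℕ) :
    IsMatchingSwap G (configuration σ t *
      (exchangeMet G σ hα (t + 1) * (exchangeMet G σ hα t)⁻¹) * (configuration σ t)⁻¹) := by
  obtain ⟨hdiff, hsucc⟩ := restrictInvolution_eq_mul hα (apply_mem_metBefore (G := G) (σ := σ) hα)
    (apply_mem_metBefore hα) fun x (hx : x ∈ metBefore G σ α t) ↦
      let ⟨i, hi, hadj⟩ := hx
      (⟨i, Nat.lt_succ_of_lt hi, hadj⟩ : x ∈ metBefore G σ α (t + 1))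
  rw [exchangeMet, hsucc, exchangeMet, mul_inv_cancel_right]
  refine IsMatchingSwap.conj_restrictInvolution hα hdiff fun x hx ↦ ?_
  obtain ⟨⟨i, hi, hadj⟩, hnot⟩ := hx
  obtain rfl : i = t := by
    by_contra hit
    exact hnot ⟨i, by lia, hadj⟩
  exact hadj

/-- Any involution all of whose pairs of partners meet in the course of a strategy can be carried
out along the way. -/
theorem HasStrategy.interleave {T : ℕ} {π α : Equiv.Perm V} {M : V → V → Prop}
    (h : HasStrategy G T π M) (hα : Involutive α) (hM : ∀ x, α x ≠ x → M x (α x)) :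
    HasStrategy G (2 * T + 1) (π * α) ⊥ := by
  obtain ⟨σ, hσ, rfl, hmeet⟩ := h
  have hrun (t : ℕ) (ht : t ≤ T) :
      HasStrategy G (2 * t) (configuration σ t * exchangeMet G σ hα t) ⊥ := by
    induction t with
    | zero => simpa [exchangeMet_zero, configuration] using HasStrategy.zero
    | succ t ih =>
      have := (ih (by lia)).trans ((isMatchingSwap_exchangeMet σ hα t).hasStrategy.trans
        (hσ t (by lia)).hasStrategy)
      simpa [configuration, mul_assoc, mul_add] using this
  have hend : exchangeMet G σ hα (T + 1) = α := by
    refine Equiv.ext fun x ↦ ?_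
    by_cases hx : x ∈ metBefore G σ α (T + 1)
    · exact restrictInvolution_of_mem hα _ hx
    · refine (restrictInvolution_of_notMem hα _ hx).trans ?_
      by_contra hne
      obtain ⟨i, hi, hadj⟩ := hmeet x _ (hM x (Ne.symm hne))
      exact hx ⟨i, Nat.lt_succ_of_le hi, by simpa only [coe_configuration] using hadj⟩
  have := (hrun T le_rfl).trans (isMatchingSwap_exchangeMet σ hα T).hasStrategy
  rwa [mul_assoc, inv_mul_cancel_left, hend, mul_assoc, inv_mul_cancel_right] at this

end Interleaving

section Exchange

open Function

variable {V : Type*} {G : SimpleGraph V}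

theorem exists_involutive_perm_eqOn {X : Set V} {f : V → V} (hf : Set.InjOn f X)
    (hfX : ∀ x ∈ X, f x ∉ X) :
    ∃ α : Equiv.Perm V, Involutive α ∧ (∀ x ∈ X, α x = f x) ∧ ∀ x ∉ X, α x ∉ X → α x = x := by
  let g (x : V) : V :=
    if x ∈ X then f x else if h : ∃ y ∈ X, f y = x then h.choose else x
  have hgf (y : V) (hy : y ∈ X) : g (f y) = y := by
    have hex : ∃ z ∈ X, f z = f y := ⟨y, hy, rfl⟩
    simpa [g, hfX y hy, hex] using hf hex.choose_spec.1 hy hex.choose_spec.2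
  have hgX (x : V) (hx : x ∈ X) : g x = f x := if_pos hx
  have hg (x : V) (hx : x ∉ X) (hex : ¬∃ y ∈ X, f y = x) : g x = x := by
    simp only [g, if_neg hx, dif_neg hex]
  have hinv : Involutive g := fun x ↦ by
    by_cases hx : x ∈ X
    · rw [hgX x hx, hgf x hx]
    by_cases hex : ∃ y ∈ X, f y = x
    · obtain ⟨y, hy, rfl⟩ := hex
      rw [hgf y hy, hgX y hy]
    · rw [hg x hx hex, hg x hx hex]
  refine ⟨hinv.toPerm, hinv, hgX, fun x hx hgx ↦ hg x hx ?_⟩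
  rintro ⟨y, hy, rfl⟩
  change g (f y) ∉ X at hgx
  exact hgx ((hgf y hy).symm ▸ hy)

theorem exists_involutive_perm_mapsTo {X Y : Finset V} (hXY : Disjoint X Y) (hcard : #X ≤ #Y) :
    ∃ α : Equiv.Perm V, Involutive α ∧ (∀ x ∈ X, α x ∈ Y) ∧ ∀ x ∉ X, α x ∉ X → α x = x := by
  obtain ⟨f, hf, hmaps⟩ : ∃ f : V → V, Set.InjOn f X ∧ ∀ x ∈ X, f x ∈ Y := by
    cases isEmpty_or_nonempty V
    · exact ⟨id, Set.injOn_id _, fun x ↦ isEmptyElim x⟩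
    · obtain ⟨f, hmaps, hf⟩ := X.finite_toSet.exists_injOn_of_encard_le (t := (Y : Set V))
        (by simpa using hcard)
      exact ⟨f, hf, hmaps⟩
  obtain ⟨α, hα, hαf, hout⟩ :=
    exists_involutive_perm_eqOn hf fun x hx ↦ disjoint_right.1 hXY (hmaps x hx)
  exact ⟨α, hα, fun x hx ↦ hαf x hx ▸ hmaps x hx, hout⟩

theorem HasStrategy.exists_exchange {T : ℕ} {π : Equiv.Perm V} {X Y : Finset V}
    (h : HasStrategy G T π fun a b ↦ a ∈ Y ∧ b ∈ X) (hXY : Disjoint X Y) (hcard : #X ≤ #Y) :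
    ∃ α : Equiv.Perm V, HasStrategy G (2 * T + 1) (π * α) ⊥ ∧ Involutive α ∧
      (∀ x ∈ X, α x ∈ Y) ∧ ∀ x ∉ X, α x ∉ X → α x = x := by
  obtain ⟨α, hα, hαY, hαX⟩ := exists_involutive_perm_mapsTo hXY hcard
  refine ⟨α, h.symm.interleave hα fun x hx ↦ ?_, hα, hαY, hαX⟩
  by_cases hxX : x ∈ X
  · exact .inr ⟨hαY x hxX, hxX⟩
  · have hαx : α x ∈ X := by_contra fun h ↦ hx (hαX x hxX h)
    exact .inl ⟨hα x ▸ hαY _ hαx, hαx⟩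

variable [Fintype V]

/-- In `E` rounds, the places outside `S` can be filled with agents standing in a prescribed subset
of `S`, as long as that subset is large enough. -/
def CanReplaceOutside (G : SimpleGraph V) (S : Finset V) (E : ℕ) : Prop :=
  ∀ Y ⊆ S, #Sᶜ ≤ #Y → ∃ ρ, HasStrategy G E ρ ⊥ ∧ ∀ x, ρ x ∉ S → x ∈ Y

/-- Run through three configurations in which disjoint sets of agents are outside `S`: each pair of
agents is inside `S` in one of the three. -/
theorem connected_and_AC_le_of_canReplaceOutside [Nonempty V] {S : Finset V} {T E : ℕ}
    {π : Equiv.Perm V} (hcard : 2 * #Sᶜ ≤ #S)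
    (hmeet : HasStrategy G T π fun a b ↦ a ≠ b ∧ a ∈ S ∧ b ∈ S) (hπ : ∀ x, π x ∈ S ↔ x ∈ S)
    (hreplace : CanReplaceOutside G S E) :
    G.Connected ∧ AC G ≤ 3 * T + 2 * E := by
  obtain ⟨ρ₁, h₁, hρ₁⟩ := hreplace S subset_rfl (by lia)
  let B : Finset V := Sᶜ.map (ρ₁.trans π).toEmbedding
  obtain ⟨ρ₂, h₂, hρ₂⟩ := hreplace (S \ B) sdiff_subset
    ((by simp [B]; lia : #Sᶜ ≤ #S - #B).trans (le_card_sdiff B S))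
  have h01 (x : V) (hx : x ∉ S) : ρ₁ (π x) ∈ S := by
    by_contra hout
    exact hx ((hπ x).1 (hρ₁ _ hout))
  have h12 (x : V) (hx : ρ₁ (π x) ∉ S) : ρ₂ (π (ρ₁ (π x))) ∈ S := by
    by_contra hout
    exact hx ((hπ _).1 (mem_sdiff.1 (hρ₂ _ hout)).1)
  have h02 (x : V) (hx : x ∉ S) : ρ₂ (π (ρ₁ (π x))) ∈ S := by
    by_contra hout
    refine (mem_sdiff.1 (hρ₂ _ hout)).2 (mem_map_of_mem _ ?_)
    rwa [mem_compl, hπ]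
  have hall : HasStrategy G (T + E + T + E + T) (π * (ρ₂ * (π * (ρ₁ * π)))) (· ≠ ·) := by
    refine ((((hmeet.comp h₁).comp hmeet).comp h₂).comp hmeet).mono fun a b hab ↦ ?_
    simp only [Equiv.Perm.mul_apply, ne_eq, EmbeddingLike.apply_eq_iff_eq]
    grind [h01 a, h01 b, h12 a, h12 b, h02 a, h02 b]
  have htime : T + E + T + E + T = 3 * T + 2 * E := by ring
  exact htime ▸ ⟨hall.connected fun _ _ ↦ id, hall.AC_le fun _ _ ↦ id⟩

theorem canReplaceOutside_of_meet {S : Finset V} {T : ℕ} {π : Equiv.Perm V}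
    (hmeet : HasStrategy G T π fun a b ↦ a ∈ S ∧ b ∉ S) (hπ : ∀ x, π x ∈ S ↔ x ∈ S) :
    CanReplaceOutside G S (2 * T + 1) := by
  intro Y hYS hY
  obtain ⟨α, hrun, hα, hαY, -⟩ := (hmeet.mono fun a b hab ↦ ⟨hYS hab.1, mem_compl.1 hab.2⟩)
    |>.exists_exchange (disjoint_compl_left.mono_right hYS) hY
  refine ⟨π * α, hrun, fun x hx ↦ ?_⟩
  rw [Equiv.Perm.mul_apply, hπ, ← mem_compl] at hx
  exact hα x ▸ hαY _ hx

/-- The places outside `S ∪ Q` are filled first, through `Q`, and then those in `Q`. -/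
theorem canReplaceOutside_of_isMatchingSwap {S Q : Finset V} {T : ℕ} {γ : Equiv.Perm V}
    (hSQ : Disjoint S Q) (hmeet : HasStrategy G T 1 fun a b ↦ a ∈ S ∧ b ∈ Q)
    (hγ : IsMatchingSwap G γ) (hγS : ∀ x ∈ S, γ x = x) (hγQ : ∀ x ∉ S ∪ Q, γ x ∈ Q) :
    CanReplaceOutside G S (4 * T + 3) := by
  intro Y hYS hY
  have hγinv (x : V) : γ (γ x) = x := (hγ x).elim (fun h ↦ by rw [h, h]) And.right
  have hcompl : #(S ∪ Q)ᶜ + #Q = #Sᶜ := by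
    rw [compl_union, ← sdiff_eq_inter_compl, card_sdiff_add_card_eq_card]
    exact fun x hx ↦ mem_compl.2 (disjoint_right.1 hSQ hx)
  let Q' : Finset V := (S ∪ Q)ᶜ.map γ.toEmbedding
  have hQ'Q : Q' ⊆ Q := forall_mem_map.2 fun x hx ↦ hγQ x (mem_compl.1 hx)
  obtain ⟨α, hrunα, hα, hαY, hαQ'⟩ := (hmeet.mono fun _ _ hab ↦ ⟨hYS hab.1, hQ'Q hab.2⟩)
    |>.exists_exchange (hSQ.symm.mono hQ'Q hYS) (by simp only [Q', card_map]; lia)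
  let Y' : Finset V := Y \ Q'.map α.toEmbedding
  have hY'S : Y' ⊆ S := sdiff_subset.trans hYS
  have hαY' (y : V) (hy : y ∈ Y') : α y = y :=
    hαQ' y (fun h ↦ disjoint_left.1 hSQ (hY'S hy) (hQ'Q h))
      fun h ↦ (mem_sdiff.1 hy).2 (mem_map.2 ⟨α y, h, hα y⟩)
  have hcard : #Q ≤ #Y' := by
    have := le_card_sdiff (Q'.map α.toEmbedding) Y
    simp only [card_map, Q'] at this
    lia
  obtain ⟨β, hrunβ, hβ, hβY', hβQ⟩ := (hmeet.mono fun _ _ hab ↦ ⟨hY'S hab.1, hab.2⟩)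
    |>.exists_exchange (hSQ.symm.mono_right hY'S) hcard
  have hfilled (z : V) (hz : z ∉ S) : α (γ (β z)) ∈ Y := by
    by_cases hzQ : z ∈ Q
    · rw [hγS _ (hY'S (hβY' z hzQ)), hαY' _ (hβY' z hzQ)]
      exact sdiff_subset (hβY' z hzQ)
    · have hβz : β z = z := hβQ z hzQ fun h ↦ hz (hY'S (hβ z ▸ hβY' _ h))
      exact hβz.symm ▸ hαY _ (mem_map_of_mem _ (by simp [hz, hzQ]))
  have htime : 4 * T + 3 = 2 * T + 1 + 1 + (2 * T + 1) := by ring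
  refine ⟨_, htime ▸ (hrunα.trans hγ.hasStrategy).trans hrunβ, fun x hx ↦ ?_⟩
  simpa [hα x, hβ _, hγinv] using hfilled _ hx

end Exchange

section Circulation

open Function

/-- Round `t` of the odd-even transposition network on `m` places in a line. -/
def oddEvenRound (m t : ℕ) : Equiv.Perm (Fin m) :=
  Involutive.toPerm
    (fun x ↦ ⟨if (x + t) % 2 = 1 then x - 1 else if x + 1 < m then x + 1 else x, by grind⟩)
    fun x ↦ by grind

theorem coe_oddEvenRound {m : ℕ} (t : ℕ) (x : Fin m) :
    (oddEvenRound m t x : ℕ) =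
      if (x + t) % 2 = 1 then (x : ℕ) - 1 else if (x : ℕ) + 1 < m then (x : ℕ) + 1 else x :=
  rfl

theorem isMatchingSwap_oddEvenRound (m t : ℕ) :
    IsMatchingSwap (pathGraph m) (oddEvenRound m t) := by
  intro x
  refine or_iff_not_imp_left.2 fun hne ↦ ⟨?_, Involutive.toPerm_involutive _ x⟩
  rw [Fin.ext_iff, coe_oddEvenRound] at hne
  rw [pathGraph_adj, coe_oddEvenRound]
  lia

/-- The odd-even network moves every agent at unit speed around a circle of `2 * m` phases, which
is folded onto the line. Phases are even at time `0`, so that the parity of place plus time is the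
direction. -/
def initialPhase (m x : ℕ) : ℕ :=
  if x % 2 = 0 then x else 2 * m - 1 - x

/-- The place on the line in the phase `q`, where `q < 4 * m` counts two turns around the circle. -/
def foldPhase (m q : ℕ) : ℕ :=
  if q < m then q else if q < 2 * m then 2 * m - 1 - q else if q < 3 * m then q - 2 * m
  else 4 * m - 1 - q

theorem coe_configuration_oddEvenRound {m t : ℕ} (x : Fin m) (ht : t ≤ 2 * m) :
    (configuration (oddEvenRound m) t x : ℕ) = foldPhase m (initialPhase m x + t) := by
  induction t with
  | zero =>
    simp only [configuration, Equiv.Perm.coe_one, id_eq, foldPhase, initialPhase]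
    lia
  | succ t ih =>
    rw [configuration, Equiv.Perm.mul_apply, coe_oddEvenRound, ih (by lia)]
    simp only [foldPhase, initialPhase]
    lia

theorem configuration_oddEvenRound_two_mul (m : ℕ) :
    configuration (oddEvenRound m) (2 * m) = 1 := by
  refine Equiv.ext fun x ↦ Fin.ext ?_
  rw [coe_configuration_oddEvenRound x le_rfl, Equiv.Perm.one_apply]
  simp only [foldPhase, initialPhase]
  lia

theorem exists_configuration_oddEvenRound_eq {m : ℕ} (x y : Fin m) :
    ∃ t ≤ 2 * m, configuration (oddEvenRound m) t x = y := by
  refine ⟨if initialPhase m x ≤ y then y - initialPhase m x else 2 * m + y - initialPhase m x,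
    by lia, Fin.ext ?_⟩
  rw [coe_configuration_oddEvenRound x (by lia)]
  simp only [foldPhase, initialPhase]
  lia

/-- Two agents are in adjacent places when their phases add up to `0` modulo `2 * m`. -/
theorem exists_pathGraph_adj_configuration_oddEvenRound {m : ℕ} {x y : Fin m} (hxy : x ≠ y) :
    ∃ t ≤ 2 * m, (pathGraph m).Adj (configuration (oddEvenRound m) t x)
      (configuration (oddEvenRound m) t y) := by
  refine ⟨2 * m - (initialPhase m x + initialPhase m y) / 2, by lia, ?_⟩
  rw [ne_eq, Fin.ext_iff] at hxy
  rw [pathGraph_adj, coe_configuration_oddEvenRound x (by lia),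
    coe_configuration_oddEvenRound y (by lia)]
  simp only [foldPhase, initialPhase]
  lia

theorem card_filter_configuration_oddEvenRound_eq_le {m : ℕ} (x y : Fin m) :
    #{t ∈ range (2 * m) | configuration (oddEvenRound m) t x = y} ≤ 2 := by
  let p := initialPhase m x
  let time (q : ℕ) : ℕ := if p ≤ q then q - p else 2 * m + q - p
  refine (card_le_card fun t ht ↦ ?_).trans (card_le_two (a := time y) (b := time (2 * m - 1 - y)))
  simp only [mem_filter, mem_range, Fin.ext_iff] at ht
  obtain ⟨ht, hty⟩ := ht
  rw [coe_configuration_oddEvenRound x ht.le] at hty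
  simp only [mem_insert, mem_singleton, time, p]
  simp only [foldPhase, initialPhase] at hty ⊢
  lia

variable {V : Type*} {G : SimpleGraph V} {m : ℕ}

theorem IsMatchingSwap.viaEmbedding {W : Type*} {G' : SimpleGraph W} {τ : Equiv.Perm W}
    (hτ : IsMatchingSwap G' τ) (f : G'.Copy G) :
    IsMatchingSwap G (τ.viaEmbedding f.toEmbedding) := by
  intro v
  by_cases hv : v ∈ Set.range f.toEmbedding
  · obtain ⟨w, rfl⟩ := hv
    simp only [Equiv.Perm.viaEmbedding_apply, EmbeddingLike.apply_eq_iff_eq]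
    exact (hτ w).imp_right fun h ↦ ⟨f.toHom.map_adj h.1, h.2⟩
  · exact .inl (Equiv.Perm.viaEmbedding_apply_of_notMem _ _ _ hv)

/-- The odd-even network on the places `ι 0, ι 1, …`, everybody else staying put. -/
noncomputable def circulation (ι : Fin m ↪ V) (t : ℕ) : Equiv.Perm V :=
  (oddEvenRound m t).viaEmbedding ι

theorem configuration_circulation (ι : Fin m ↪ V) (t : ℕ) :
    configuration (circulation ι) t = (configuration (oddEvenRound m) t).viaEmbedding ι := by
  induction t with
  | zero => exact (map_one (Equiv.Perm.viaEmbeddingHom ι)).symm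
  | succ t ih =>
    rw [configuration, ih, circulation]
    exact (map_mul (Equiv.Perm.viaEmbeddingHom ι) _ _).symm

theorem card_filter_configuration_circulation_eq_le (ι : Fin m ↪ V) (x : Fin m) (u : V) :
    #{t ∈ range (2 * m) | configuration (circulation ι) t (ι x) = u} ≤ 2 := by
  simp only [configuration_circulation, Equiv.Perm.viaEmbedding_apply]
  by_cases hu : u ∈ Set.range ι
  · obtain ⟨y, rfl⟩ := hu
    simpa only [ι.injective.eq_iff] using card_filter_configuration_oddEvenRound_eq_le x y
  · rw [filter_false_of_mem fun t _ h ↦ hu ⟨_, h⟩, card_empty]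
    exact zero_le_two

theorem viaEmbedding_mem_map_univ_iff {W : Type*} [Fintype W] (τ : Equiv.Perm W) (ι : W ↪ V)
    {v : V} :
    τ.viaEmbedding ι v ∈ univ.map ι ↔ v ∈ univ.map ι := by
  by_cases hv : v ∈ Set.range ι
  · obtain ⟨w, rfl⟩ := hv
    simp [Equiv.Perm.viaEmbedding_apply]
  · rw [Equiv.Perm.viaEmbedding_apply_of_notMem _ _ _ hv]

theorem hasStrategy_circulation (P : (pathGraph m).Copy G) :
    HasStrategy G (2 * m) 1 fun a b ↦ a ∈ univ.map P.toEmbedding ∧ a ≠ b ∧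
      (b ∈ univ.map P.toEmbedding ∨ ∃ s ∈ univ.map P.toEmbedding, G.Adj s b) := by
  have hone : configuration (circulation P.toEmbedding) (2 * m) = 1 := by
    rw [configuration_circulation, configuration_oddEvenRound_two_mul]
    exact map_one (Equiv.Perm.viaEmbeddingHom P.toEmbedding)
  refine ⟨circulation P.toEmbedding, fun t _ ↦ (isMatchingSwap_oddEvenRound m t).viaEmbedding P,
    hone, fun a b ⟨ha, hab, hb⟩ ↦ ?_⟩
  simp only [Acquainted, ← coe_configuration, configuration_circulation]
  obtain ⟨x, -, rfl⟩ := mem_map.1 ha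
  by_cases hbS : b ∈ univ.map P.toEmbedding
  · obtain ⟨y, -, rfl⟩ := mem_map.1 hbS
    obtain ⟨t, ht, hadj⟩ := exists_pathGraph_adj_configuration_oddEvenRound
      (ne_of_apply_ne P.toEmbedding hab)
    refine ⟨t, ht, ?_⟩
    simpa only [Equiv.Perm.viaEmbedding_apply] using! P.toHom.map_adj hadj
  · obtain ⟨s, hs, hadj⟩ := hb.resolve_left hbS
    obtain ⟨y, -, rfl⟩ := mem_map.1 hs
    obtain ⟨t, ht, rfl⟩ := exists_configuration_oddEvenRound_eq x y
    refine ⟨t, ht, ?_⟩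
    rwa [Equiv.Perm.viaEmbedding_apply, Equiv.Perm.viaEmbedding_apply_of_notMem]
    simpa using hbS

variable [Fintype V]

theorem connected_and_AC_le_of_acquainted_circulation [Nonempty V] (P : (pathGraph m).Copy G)
    {T : ℕ} (hm : 2 * Fintype.card V ≤ 3 * m)
    (hmeet : ∀ x b, P x ≠ b → Acquainted G (circulation P.toEmbedding) T (P x) b) :
    G.Connected ∧ AC G ≤ 7 * T + 2 := by
  let S : Finset V := univ.map P.toEmbedding
  have hstrat : HasStrategy G T (configuration (circulation P.toEmbedding) T)
      fun a b ↦ a ∈ S ∧ a ≠ b := by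
    refine ⟨_, fun t _ ↦ (isMatchingSwap_oddEvenRound m t).viaEmbedding P, rfl, ?_⟩
    rintro a b ⟨ha, hab⟩
    obtain ⟨x, -, rfl⟩ := mem_map.1 ha
    exact hmeet x b hab
  have hstable (v : V) : configuration (circulation P.toEmbedding) T v ∈ S ↔ v ∈ S := by
    rw [configuration_circulation, viaEmbedding_mem_map_univ_iff]
  have hcard : 2 * #Sᶜ ≤ #S := by
    rw [card_compl]
    simp only [S, card_map, card_univ, Fintype.card_fin]
    lia
  have htime : 7 * T + 2 = 3 * T + 2 * (2 * T + 1) := by ring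
  exact htime ▸ connected_and_AC_le_of_canReplaceOutside hcard
    (hstrat.mono fun a b h ↦ ⟨h.2.1, h.1⟩) hstable
    (canReplaceOutside_of_meet (hstrat.mono fun a b h ↦ ⟨h.1, fun hab ↦ h.2 (hab ▸ h.1)⟩) hstable)

end Circulation

section Attachment

variable {V : Type*} {G H : SimpleGraph V}

/-- The vertex `v` is at distance at least two from the set `S` in `H`. -/
def IsRemote (H : SimpleGraph V) (S : Finset V) (v : V) : Prop :=
  v ∉ S ∧ ∀ s ∈ S, ¬H.Adj s v

/-- Every vertex of `H` has a neighbour, and the vertices remote from `S` are pairwise nonadjacent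
and have no common neighbours. -/
structure IsWellAttached (H : SimpleGraph V) (S : Finset V) : Prop where
  exists_adj (v : V) : ∃ w, H.Adj v w
  not_adj {v w : V} : IsRemote H S v → IsRemote H S w → ¬H.Adj v w
  eq_of_adj {v w q : V} : IsRemote H S v → IsRemote H S w → H.Adj v q → H.Adj w q → v = w

theorem IsWellAttached.exists_isMatchingSwap {S : Finset V} (hS : IsWellAttached H S) :
    ∃ γ, IsMatchingSwap H γ ∧ (∀ x ∈ S, γ x = x) ∧
      ∀ x, IsRemote H S x → γ x ∉ S ∧ ∃ s ∈ S, H.Adj s (γ x) := by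
  choose f hf using hS.exists_adj
  let R : Set V := {x | IsRemote H S x}
  have hfR (x : V) (hx : x ∈ R) : f x ∉ R := fun h ↦ hS.not_adj hx h (hf x)
  have hfS (x : V) (hx : x ∈ R) : f x ∉ S := fun h ↦ hx.2 _ h (hf x).symm
  have hinj : Set.InjOn f R := fun x hx y hy hxy ↦
    hS.eq_of_adj hx hy (hf x) (hxy ▸ hf y)
  obtain ⟨γ, hγ, hγf, hγR⟩ := exists_involutive_perm_eqOn hinj hfR
  refine ⟨γ, fun x ↦ ?_, fun x hx ↦ ?_, fun x hx ↦ ?_⟩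
  · by_cases hxR : x ∈ R
    · exact .inr ⟨hγf x hxR ▸ hf x, hγ x⟩
    by_cases hγx : γ x ∈ R
    · have hadj := hf (γ x)
      rw [← hγf _ hγx, hγ x] at hadj
      exact .inr ⟨hadj.symm, hγ x⟩
    · exact .inl (hγR x hxR hγx)
  · have hxR : x ∉ R := fun h ↦ h.1 hx
    refine hγR x hxR fun h ↦ hfS _ h ?_
    rwa [← hγf _ h, hγ x]
  · rw [hγf x hx]
    have hnear : ∃ s ∈ S, H.Adj s (f x) := by
      by_contra! h
      exact hfR x hx ⟨hfS x hx, h⟩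
    exact ⟨hfS x hx, hnear⟩

theorem connected_and_AC_le_of_isWellAttached [Fintype V] [Nonempty V] {m : ℕ}
    (P : (pathGraph m).Copy G) (hm : 2 * Fintype.card V ≤ 3 * m) (hHG : H ≤ G)
    (hH : IsWellAttached H (univ.map P.toEmbedding)) : G.Connected ∧ AC G ≤ 22 * m + 6 := by
  set S : Finset V := univ.map P.toEmbedding
  let Q : Finset V := {x | x ∉ S ∧ ∃ s ∈ S, H.Adj s x}
  have hcard : 2 * #Sᶜ ≤ #S := by
    rw [card_compl]
    simp only [S, card_map, card_univ, Fintype.card_fin]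
    lia
  obtain ⟨γ, hγ, hγS, hγQ⟩ := hH.exists_isMatchingSwap
  have hreplace : CanReplaceOutside G S (4 * (2 * m) + 3) := by
    refine canReplaceOutside_of_isMatchingSwap (Q := Q) (γ := γ)
      (disjoint_left.2 fun x hx hxQ ↦ (mem_filter.1 hxQ).2.1 hx)
      ((hasStrategy_circulation P).mono fun a b ⟨ha, hb⟩ ↦ ?_)
      (fun v ↦ (hγ v).imp_right fun h ↦ ⟨hHG h.1, h.2⟩) hγS fun x hx ↦ ?_
    · obtain ⟨hbS, s, hs, hadj⟩ := (mem_filter.1 hb).2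
      exact ⟨ha, fun hab ↦ hbS (hab ▸ ha), .inr ⟨s, hs, hHG hadj⟩⟩
    · simp only [Q, mem_union, mem_filter_univ, not_or, not_and, not_exists] at hx
      exact mem_filter.2 ⟨mem_univ _, hγQ x ⟨hx.1, hx.2 hx.1⟩⟩
  have htime : 22 * m + 6 = 3 * (2 * m) + 2 * (4 * (2 * m) + 3) := by ring
  exact htime ▸ connected_and_AC_le_of_canReplaceOutside hcard
    ((hasStrategy_circulation P).mono fun a b h ↦ ⟨h.2.1, h.1, .inl h.2.2⟩) (fun _ ↦ Iff.rfl)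
    hreplace

end Attachment

section Events

open MeasureTheory ProbabilityTheory unitInterval

theorem measureReal_le_card_mul_of_subset_biUnion {α β : Type*} [MeasurableSpace α]
    {μ : Measure α} [IsFiniteMeasure μ] {s : Set α} {t : Finset β} {f : β → Set α} {c : ℝ}
    (hs : ∀ x ∈ s, ∃ b ∈ t, x ∈ f b) (hf : ∀ b ∈ t, μ.real (f b) ≤ c) : μ.real s ≤ #t * c := by
  have hsub : s ⊆ ⋃ b ∈ t, f b := fun x hx ↦ by simpa using hs x hx
  calc μ.real s ≤ μ.real (⋃ b ∈ t, f b) := measureReal_mono hsub (measure_ne_top _ _)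
    _ ≤ ∑ b ∈ t, μ.real (f b) := measureReal_biUnion_finset_le _ _
    _ ≤ #t * c := by simpa only [nsmul_eq_mul] using sum_le_card_nsmul t _ c hf

variable {V : Type*}

theorem binomialRandom_real_subset_edgeSet_forall_not_adj_le [Finite V] (p : I) {X Y : Finset V}
    (hXY : Disjoint X Y) (D : Finset (Sym2 V)) :
    G(V, p).real {G | ↑D ⊆ G.edgeSet ∧ ∀ x ∈ X, ∀ y ∈ Y, ¬G.Adj x y} ≤
      p ^ #D * (1 - p : ℝ) ^ (#X * #Y) := by
  let N : Finset (Sym2 V) := (X ×ˢ Y).image fun x ↦ s(x.1, x.2)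
  have hmem {e} : e ∈ N ↔ ∃ x ∈ X, ∃ y ∈ Y, s(x, y) = e := by
    simp [N, and_assoc]
  have hN : #N = #X * #Y := by
    rw [← card_product]
    refine card_image_of_injOn ?_
    rintro ⟨x, y⟩ hxy ⟨x', y'⟩ hxy' heq
    have := disjoint_left.1 hXY
    simp only [coe_product, Set.mem_prod, mem_coe] at hxy hxy'
    grind
  have hNdiag : ∀ e ∈ N, ¬e.IsDiag := fun e he ↦ by
    obtain ⟨x, hx, y, hy, rfl⟩ := hmem.1 he
    exact fun h ↦ disjoint_left.1 hXY hx (Sym2.mk_isDiag_iff.1 h ▸ hy)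
  have hset : {G : SimpleGraph V | ↑D ⊆ G.edgeSet ∧ ∀ x ∈ X, ∀ y ∈ Y, ¬G.Adj x y} =
      {G | ↑D ⊆ G.edgeSet ∧ Disjoint ↑N G.edgeSet} := by
    ext G
    refine and_congr_right fun _ ↦ ⟨fun h ↦ Set.disjoint_left.2 fun e he ↦ ?_, fun h x hx y hy ↦
      Set.disjoint_left.1 h (hmem.2 ⟨x, hx, y, hy, rfl⟩)⟩
    obtain ⟨x, hx, y, hy, rfl⟩ := hmem.1 he
    exact h x hx y hy
  rw [hset]
  obtain hempty | ⟨G, hDG, hNG⟩ := Set.eq_empty_or_nonempty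
    {G : SimpleGraph V | ↑D ⊆ G.edgeSet ∧ Disjoint ↑N G.edgeSet}
  · rw [hempty, measureReal_empty]
    exact mul_nonneg (pow_nonneg p.2.1 _) (pow_nonneg (sub_nonneg.2 p.2.2) _)
  · have hDdiag : ∀ e ∈ D, ¬e.IsDiag := fun e he ↦ G.not_isDiag_of_mem_edgeSet (hDG he)
    have hDN : Disjoint D N := by
      simpa only [disjoint_coe] using (hNG.mono_right hDG).symm
    rw [binomialRandom_real_cylinder p hDdiag hNdiag hDN, hN]

theorem binomialRandom_real_subset_edgeSet_isRemote_le [Finite V] (p : I) (S : Finset V) {v w : V}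
    (hvw : v ≠ w) (D : Finset (Sym2 V)) :
    G(V, p).real {G | ↑D ⊆ G.edgeSet ∧ IsRemote G S v ∧ IsRemote G S w} ≤
      p ^ #D * (1 - p : ℝ) ^ (2 * #S) := by
  by_cases hS : Disjoint {v, w} S
  · have hevent := binomialRandom_real_subset_edgeSet_forall_not_adj_le p hS D
    rw [card_pair hvw] at hevent
    refine (measureReal_mono ?_ (measure_ne_top _ _)).trans hevent
    rintro G ⟨hDG, hv, hw⟩
    refine ⟨hDG, fun x hx s hs hxs ↦ ?_⟩
    obtain rfl | rfl := (mem_insert.1 hx).imp_right mem_singleton.1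
    exacts [hv.2 s hs hxs.symm, hw.2 s hs hxs.symm]
  · have hempty : {G : SimpleGraph V | ↑D ⊆ G.edgeSet ∧ IsRemote G S v ∧ IsRemote G S w} = ∅ :=
      Set.eq_empty_of_forall_notMem fun G hG ↦ hS <| by simp [hG.2.1.1, hG.2.2.1]
    rw [hempty, measureReal_empty]
    exact mul_nonneg (pow_nonneg p.2.1 _) (pow_nonneg (sub_nonneg.2 p.2.2) _)

theorem binomialRandom_real_not_acquainted_circulation_le [Finite V] (p : I) {G : SimpleGraph V}
    {m k : ℕ} (P : (pathGraph m).Copy G) (hk : 2 * k ≤ m) {x : Fin m} {b : V} (hxb : P x ≠ b) :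
    G(V, p).real {H | ¬Acquainted (G ⊔ H) (circulation P.toEmbedding) (4 * k) (P x) b} ≤
      (1 - p : ℝ) ^ k := by
  let e (t : ℕ) : Sym2 V := s(configuration (circulation P.toEmbedding) t (P x),
    configuration (circulation P.toEmbedding) t b)
  have hhit (f : Sym2 V) : #{t ∈ range (4 * k) | e t = f} ≤ 4 := by
    induction f with | _ u v
    have hone (u : V) :
        #{t ∈ range (4 * k) | configuration (circulation P.toEmbedding) t (P x) = u} ≤ 2 :=
      (card_le_card <| filter_subset_filter _ <| range_mono (by lia)).trans
        (card_filter_configuration_circulation_eq_le P.toEmbedding x u)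
    refine (card_le_card fun t ht ↦ ?_).trans <| (card_union_le _ _).trans <|
      add_le_add (hone u) (hone v)
    simp only [e, mem_filter, Sym2.eq_iff, mem_union] at ht ⊢
    tauto
  have hcard : k ≤ #((range (4 * k)).image e) := by
    have := card_le_mul_card_image (f := e) (range (4 * k)) 4 fun f _ ↦ hhit f
    rw [card_range] at this
    lia
  have hdiag : ∀ f ∈ (range (4 * k)).image e, ¬f.IsDiag := by
    simp only [e, forall_mem_image, Sym2.mk_isDiag_iff, EmbeddingLike.apply_eq_iff_eq]
    exact fun _ _ ↦ hxb
  calc G(V, p).real {H | ¬Acquainted (G ⊔ H) (circulation P.toEmbedding) (4 * k) (P x) b}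
    _ ≤ G(V, p).real {H | Disjoint ↑((range (4 * k)).image e) H.edgeSet} := by
      refine measureReal_mono fun H hH ↦ Set.disjoint_left.2 fun f hf hfH ↦ ?_
      obtain ⟨t, ht, rfl⟩ := mem_image.1 hf
      refine hH ⟨t, (mem_range.1 ht).le, Or.inr ?_⟩
      simpa [e, coe_configuration] using hfH
    _ = (1 - p : ℝ) ^ #((range (4 * k)).image e) := binomialRandom_real_disjoint_edgeSet p hdiag
    _ ≤ (1 - p : ℝ) ^ k := pow_le_pow_of_le_one (sub_nonneg.2 p.2.2) (sub_le_self _ p.2.1) hcard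

variable [Fintype V]

theorem binomialRandom_real_not_exists_pathGraph_copy_le (p : I) (k : ℕ) :
    G(V, p).real {G | ¬∃ m, Nonempty ((pathGraph m).Copy G) ∧ Fintype.card V ≤ m + 2 * k} ≤
      4 ^ Fintype.card V * (1 - p : ℝ) ^ k ^ 2 := by
  let pairs : Finset (Finset V × Finset V) := {x | Disjoint x.1 x.2 ∧ #x.1 = k ∧ #x.2 = k}
  have hcard : (#pairs : ℝ) ≤ 4 ^ Fintype.card V := by
    have : #pairs ≤ (2 * 2) ^ Fintype.card V := by
      simpa only [Fintype.card_prod, Fintype.card_finset, mul_pow] using card_le_univ pairs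
    exact_mod_cast this
  refine (measureReal_le_card_mul_of_subset_biUnion (t := pairs)
    (f := fun x ↦ {G | ↑(∅ : Finset (Sym2 V)) ⊆ G.edgeSet ∧ ∀ v ∈ x.1, ∀ w ∈ x.2, ¬G.Adj v w})
    (fun G hG ↦ ?_) fun x hx ↦ ?_).trans
    (mul_le_mul_of_nonneg_right hcard (pow_nonneg (sub_nonneg.2 p.2.2) _))
  · by_contra! hnot
    refine hG (exists_pathGraph_copy fun X Y hXY hX hY ↦ ?_)
    simpa using hnot (X, Y) ((mem_filter_univ _).2 ⟨hXY, hX, hY⟩)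
  · obtain ⟨hdisj, hX, hY⟩ := (mem_filter_univ _).1 hx
    simpa [hX, hY, sq] using binomialRandom_real_subset_edgeSet_forall_not_adj_le p hdisj ∅

theorem binomialRandom_real_exists_forall_not_adj_le (p : I) :
    G(V, p).real {G | ∃ v, ∀ w, ¬G.Adj v w} ≤
      Fintype.card V * (1 - p : ℝ) ^ (Fintype.card V - 1) := by
  rw [← card_univ]
  refine measureReal_le_card_mul_of_subset_biUnion (t := univ)
    (f := fun v ↦ {G | ↑(∅ : Finset (Sym2 V)) ⊆ G.edgeSet ∧
      ∀ x ∈ ({v} : Finset V), ∀ w ∈ ({v}ᶜ : Finset V), ¬G.Adj x w}) ?_ fun v _ ↦ ?_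
  · rintro G ⟨v, hv⟩
    exact ⟨v, mem_univ v, by simp, fun x hx w _ ↦ mem_singleton.1 hx ▸ hv w⟩
  · simpa [card_compl] using
      binomialRandom_real_subset_edgeSet_forall_not_adj_le p
        (_root_.disjoint_compl_right (a := ({v} : Finset V))) ∅

theorem binomialRandom_real_exists_adj_isRemote_le (p : I) (S : Finset V) :
    G(V, p).real {G | ∃ v w, IsRemote G S v ∧ IsRemote G S w ∧ G.Adj v w} ≤
      Fintype.card V ^ 2 * (p * (1 - p : ℝ) ^ (2 * #S)) := by
  have hcard : (#(univ.offDiag : Finset (V × V)) : ℝ) ≤ Fintype.card V ^ 2 := by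
    exact_mod_cast (card_le_univ _).trans_eq (by rw [Fintype.card_prod, sq])
  have hp : 0 ≤ p * (1 - p : ℝ) ^ (2 * #S) :=
    mul_nonneg p.2.1 (pow_nonneg (sub_nonneg.2 p.2.2) _)
  refine (measureReal_le_card_mul_of_subset_biUnion (t := (univ.offDiag : Finset (V × V)))
    (f := fun x ↦ {G | ↑({s(x.1, x.2)} : Finset (Sym2 V)) ⊆ G.edgeSet ∧ IsRemote G S x.1 ∧
      IsRemote G S x.2}) ?_ fun x hx ↦ ?_).trans (mul_le_mul_of_nonneg_right hcard hp)
  · rintro G ⟨v, w, hv, hw, hvw⟩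
    exact ⟨(v, w), by simp [hvw.ne], by simpa using hvw, hv, hw⟩
  · simpa using binomialRandom_real_subset_edgeSet_isRemote_le p S (mem_offDiag.1 hx).2.2
      {s(x.1, x.2)}

theorem binomialRandom_real_exists_adj_adj_isRemote_le (p : I) (S : Finset V) :
    G(V, p).real {G | ∃ v w q, v ≠ w ∧ IsRemote G S v ∧ IsRemote G S w ∧ G.Adj v q ∧ G.Adj w q} ≤
      Fintype.card V ^ 3 * (p ^ 2 * (1 - p : ℝ) ^ (2 * #S)) := by
  have hcard : (#((univ.offDiag : Finset (V × V)) ×ˢ (univ : Finset V)) : ℝ) ≤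
      Fintype.card V ^ 3 := by
    exact_mod_cast (card_le_univ _).trans_eq (by simp only [Fintype.card_prod]; ring)
  have hp : 0 ≤ p ^ 2 * (1 - p : ℝ) ^ (2 * #S) :=
    mul_nonneg (pow_nonneg p.2.1 _) (pow_nonneg (sub_nonneg.2 p.2.2) _)
  refine (measureReal_le_card_mul_of_subset_biUnion
    (t := (univ.offDiag : Finset (V × V)) ×ˢ (univ : Finset V))
    (f := fun x ↦ {G | ↑({s(x.1.1, x.2), s(x.1.2, x.2)} : Finset (Sym2 V)) ⊆ G.edgeSet ∧
      IsRemote G S x.1.1 ∧ IsRemote G S x.1.2}) ?_ fun x hx ↦ ?_).trans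
    (mul_le_mul_of_nonneg_right hcard hp)
  · rintro G ⟨v, w, q, hne, hv, hw, hvq, hwq⟩
    exact ⟨((v, w), q), by simp [hne], by simp [Set.insert_subset_iff, hvq, hwq], hv, hw⟩
  · have hne : x.1.1 ≠ x.1.2 := (mem_offDiag.1 (mem_product.1 hx).1).2.2
    have hpair : s(x.1.1, x.2) ≠ s(x.1.2, x.2) := fun h ↦ hne (Sym2.congr_left.1 h)
    simpa [card_pair hpair] using binomialRandom_real_subset_edgeSet_isRemote_le p S hne
      {s(x.1.1, x.2), s(x.1.2, x.2)}

theorem binomialRandom_real_not_isWellAttached_le (p : I) (S : Finset V) :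
    G(V, p).real {G | ¬IsWellAttached G S} ≤
      Fintype.card V * (1 - p : ℝ) ^ (Fintype.card V - 1) +
      (Fintype.card V ^ 2 * (p * (1 - p : ℝ) ^ (2 * #S)) +
        Fintype.card V ^ 3 * (p ^ 2 * (1 - p : ℝ) ^ (2 * #S))) := by
  have hcover : {G : SimpleGraph V | ¬IsWellAttached G S} ⊆
      {G | ∃ v, ∀ w, ¬G.Adj v w} ∪
      ({G | ∃ v w, IsRemote G S v ∧ IsRemote G S w ∧ G.Adj v w} ∪
        {G | ∃ v w q, v ≠ w ∧ IsRemote G S v ∧ IsRemote G S w ∧ G.Adj v q ∧ G.Adj w q}) := by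
    intro G hG
    by_contra! hnot
    simp only [Set.mem_union, Set.mem_ofPred_eq, not_or] at hnot
    obtain ⟨hiso, hedge, hcherry⟩ := hnot
    push Not at hiso
    exact hG ⟨hiso, fun hv hw hvw ↦ hedge ⟨_, _, hv, hw, hvw⟩, fun hv hw hvq hwq ↦
      by_contra fun hne ↦ hcherry ⟨_, _, _, hne, hv, hw, hvq, hwq⟩⟩
  refine (measureReal_mono hcover (measure_ne_top _ _)).trans <| (measureReal_union_le _ _).trans <|
    add_le_add (binomialRandom_real_exists_forall_not_adj_le p) <|
    (measureReal_union_le _ _).trans <| add_le_add ?_ ?_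
  · exact binomialRandom_real_exists_adj_isRemote_le p S
  · exact binomialRandom_real_exists_adj_adj_isRemote_le p S

theorem binomialRandom_real_not_forall_acquainted_circulation_le (p : I) {G : SimpleGraph V}
    {m k : ℕ} (P : (pathGraph m).Copy G) (hk : 2 * k ≤ m) :
    G(V, p).real {H | ¬∀ x b, P x ≠ b →
      Acquainted (G ⊔ H) (circulation P.toEmbedding) (4 * k) (P x) b} ≤
      Fintype.card V ^ 2 * (1 - p : ℝ) ^ k := by
  have hcard : (#{y : Fin m × V | P y.1 ≠ y.2} : ℝ) ≤ Fintype.card V ^ 2 := by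
    have hm : m ≤ Fintype.card V := by simpa using Fintype.card_le_of_embedding P.toEmbedding
    refine le_trans (Nat.cast_le.2 (card_le_univ _)) ?_
    simp only [Fintype.card_prod, Fintype.card_fin]
    exact_mod_cast (Nat.mul_le_mul_right _ hm).trans_eq (sq _).symm
  refine (measureReal_le_card_mul_of_subset_biUnion (t := {y : Fin m × V | P y.1 ≠ y.2})
    (f := fun y ↦ {H | ¬Acquainted (G ⊔ H) (circulation P.toEmbedding) (4 * k) (P y.1) y.2})
    (fun H hH ↦ ?_) fun y hy ↦ ?_).trans
    (mul_le_mul_of_nonneg_right hcard (pow_nonneg (sub_nonneg.2 p.2.2) _))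
  · simp only [Set.mem_ofPred_eq, not_forall] at hH
    obtain ⟨x, b, hxb, hH⟩ := hH
    exact ⟨(x, b), (mem_filter_univ _).2 hxb, hH⟩
  · exact binomialRandom_real_not_acquainted_circulation_le p P hk (mem_filter.1 hy).2

end Events

section SecondRound

open MeasureTheory ProbabilityTheory unitInterval

theorem one_sub_pow_le_exp_neg {b x : ℝ} {k : ℕ} (hb : b ≤ 1) (hx : x ≤ b * k) :
    (1 - b) ^ k ≤ Real.exp (-x) :=
  calc (1 - b) ^ k ≤ Real.exp (-b) ^ k :=
        pow_le_pow_left₀ (sub_nonneg.2 hb) (Real.one_sub_le_exp_neg b) k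
    _ = Real.exp (-(b * k)) := by rw [← Real.exp_nat_mul]; ring_nf
    _ ≤ Real.exp (-x) := Real.exp_le_exp.2 (neg_le_neg hx)

theorem mul_one_sub_pow_le_exp {b x : ℝ} {n k : ℕ} (hn : 1 ≤ n) (hb : b ≤ 1)
    (hx : Real.log n - x ≤ b * k) : n * (1 - b) ^ k ≤ Real.exp x :=
  calc n * (1 - b) ^ k ≤ Real.exp (Real.log n) * Real.exp (-(Real.log n - x)) := by
        rw [Real.exp_log (by positivity)]
        gcongr
        exact one_sub_pow_le_exp_neg hb hx
    _ = Real.exp x := by rw [← Real.exp_add]; ring_nf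

variable {V : Type*} [Fintype V] {G : SimpleGraph V} {m : ℕ}

theorem binomialRandom_real_not_exists_long_path_le (p : I) (hn : 40 ≤ Fintype.card V)
    (hp : 300 ≤ p * (Fintype.card V : ℝ)) :
    G(V, p).real {G | ¬∃ m, Nonempty ((pathGraph m).Copy G) ∧ 3 * Fintype.card V ≤ 4 * m} ≤
      Real.exp (-Fintype.card V) := by
  set n := Fintype.card V
  let k := n / 8
  have hk : (n : ℝ) ≤ 10 * k := by
    exact_mod_cast (by lia : n ≤ 10 * k)
  have hedges : 3 * (n : ℝ) ≤ p * (k ^ 2 : ℕ) := by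
    have hsq : (n : ℝ) ^ 2 ≤ 100 * k ^ 2 := by nlinarith
    push_cast
    nlinarith [mul_le_mul_of_nonneg_left hsq p.2.1]
  have hfour : (4 : ℝ) ≤ Real.exp 2 := by
    rw [show (2 : ℝ) = 1 + 1 by norm_num, Real.exp_add]
    nlinarith [Real.exp_one_gt_two]
  calc G(V, p).real {G | ¬∃ m, Nonempty ((pathGraph m).Copy G) ∧ 3 * n ≤ 4 * m}
    _ ≤ G(V, p).real {G | ¬∃ m, Nonempty ((pathGraph m).Copy G) ∧ n ≤ m + 2 * k} :=
      measureReal_mono (fun G ↦ mt fun ⟨m, hP, hm⟩ ↦ ⟨m, hP, by lia⟩) (measure_ne_top _ _)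
    _ ≤ 4 ^ n * (1 - p : ℝ) ^ k ^ 2 := binomialRandom_real_not_exists_pathGraph_copy_le p k
    _ ≤ Real.exp 2 ^ n * Real.exp (-(3 * n)) :=
      mul_le_mul (pow_le_pow_left₀ zero_le_four hfour n) (one_sub_pow_le_exp_neg p.2.2 hedges)
        (pow_nonneg (sub_nonneg.2 p.2.2) _) (by positivity)
    _ = Real.exp (-n) := by rw [← Real.exp_nat_mul, ← Real.exp_add]; ring_nf

theorem binomialRandom_real_sup_not_connected_or_AC_le_of_sparse [Nonempty V] (p : I)
    (P : (pathGraph m).Copy G) (hm : 3 * Fintype.card V ≤ 4 * m)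
    (hlow : Real.log (Fintype.card V) ≤ p * (Fintype.card V : ℝ))
    (hup : p * (Fintype.card V : ℝ) ≤ 100 * Real.log (Fintype.card V)) :
    G(V, p).real {H | ¬((G ⊔ H).Connected ∧ AC (G ⊔ H) ≤ 22 * m + 6)} ≤
      Real.exp (1 + Real.log (Fintype.card V) - p * (Fintype.card V : ℝ)) +
        (100 * Real.log (Fintype.card V) + (100 * Real.log (Fintype.card V)) ^ 2) *
          Real.exp (-(Real.log (Fintype.card V) / 2)) := by
  set n := Fintype.card V
  set L := Real.log n
  have hn : 1 ≤ n := Fintype.card_pos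
  have hisolated : n * (1 - p : ℝ) ^ (n - 1) ≤ Real.exp (1 + L - p * (n : ℝ)) := by
    refine mul_one_sub_pow_le_exp hn p.2.2 ?_
    push_cast [hn]
    linarith [p.2.2]
  have hremote : n * (1 - p : ℝ) ^ (2 * m) ≤ Real.exp (-(L / 2)) := by
    refine mul_one_sub_pow_le_exp hn p.2.2 ?_
    have hm' : 3 * (n : ℝ) ≤ 4 * m := by exact_mod_cast hm
    push_cast
    nlinarith [p.2.1]
  have hpn : 0 ≤ p * (n : ℝ) := mul_nonneg p.2.1 n.cast_nonneg
  calc G(V, p).real {H | ¬((G ⊔ H).Connected ∧ AC (G ⊔ H) ≤ 22 * m + 6)}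
    _ ≤ G(V, p).real {H | ¬IsWellAttached H (univ.map P.toEmbedding)} :=
      measureReal_mono (fun H ↦ mt fun hH ↦ connected_and_AC_le_of_isWellAttached
        ((Copy.ofLE G (G ⊔ H) le_sup_left).comp P) (by lia) le_sup_right hH) (measure_ne_top _ _)
    _ ≤ n * (1 - p : ℝ) ^ (n - 1) + (n ^ 2 * (p * (1 - p : ℝ) ^ (2 * m)) +
        n ^ 3 * (p ^ 2 * (1 - p : ℝ) ^ (2 * m))) := by
      simpa using binomialRandom_real_not_isWellAttached_le p (univ.map P.toEmbedding)
    _ = n * (1 - p : ℝ) ^ (n - 1) +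
        (p * (n : ℝ) + (p * (n : ℝ)) ^ 2) * (n * (1 - p : ℝ) ^ (2 * m)) := by ring
    _ ≤ _ := by
      have : 0 ≤ (1 - p : ℝ) := sub_nonneg.2 p.2.2
      gcongr

theorem binomialRandom_real_sup_not_connected_or_AC_le_of_dense [Nonempty V] (p : I)
    (P : (pathGraph m).Copy G) (hm : 3 * Fintype.card V ≤ 4 * m) {k : ℕ} (hk : 2 * k ≤ m)
    (hpk : 4 * Real.log (Fintype.card V) ≤ p * (k : ℝ)) :
    G(V, p).real {H | ¬((G ⊔ H).Connected ∧ AC (G ⊔ H) ≤ 28 * k + 2)} ≤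
      Real.exp (-(2 * Real.log (Fintype.card V))) := by
  set n := Fintype.card V
  have hexp : Real.exp (Real.log n) = n :=
    Real.exp_log (Nat.cast_pos.2 Fintype.card_pos)
  calc G(V, p).real {H | ¬((G ⊔ H).Connected ∧ AC (G ⊔ H) ≤ 28 * k + 2)}
    _ ≤ G(V, p).real {H | ¬∀ x b, P x ≠ b →
        Acquainted (G ⊔ H) (circulation P.toEmbedding) (4 * k) (P x) b} :=
      measureReal_mono (fun H ↦ mt fun hH ↦ by
        have hAC := connected_and_AC_le_of_acquainted_circulation
          ((Copy.ofLE G (G ⊔ H) le_sup_left).comp P) (T := 4 * k) (by lia) hH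
        exact hAC.imp_right fun h ↦ h.trans_eq (by ring)) (measure_ne_top _ _)
    _ ≤ n ^ 2 * (1 - p : ℝ) ^ k :=
      binomialRandom_real_not_forall_acquainted_circulation_le p P hk
    _ ≤ Real.exp (Real.log n) ^ 2 * Real.exp (-(4 * Real.log n)) := by
      rw [hexp]
      gcongr
      exact one_sub_pow_le_exp_neg p.2.2 hpk
    _ = Real.exp (-(2 * Real.log n)) := by
      rw [← Real.exp_nat_mul, ← Real.exp_add]
      push_cast
      ring_nf

theorem exists_nat_four_mul_le_mul {n m : ℕ} {p : ℝ} (hL : 1 ≤ Real.log n)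
    (hm : 3 * n ≤ 4 * m) (hp : 0 < p) (hpn : 100 * Real.log n < p * n) :
    ∃ k : ℕ, 2 * k ≤ m ∧ 4 * Real.log n ≤ p * k ∧ p * k ≤ 4 * Real.log n + p := by
  have hn : 2 < n := by
    have hn0 : 0 < (n : ℝ) := by
      rw [Nat.cast_pos, Nat.pos_iff_ne_zero]
      rintro rfl
      norm_num at hL
    exact_mod_cast Real.exp_one_gt_two.trans_le ((Real.le_log_iff_exp_le hn0).1 hL)
  have hlt : (⌈4 * Real.log n / p⌉₊ : ℝ) < 4 * Real.log n / p + 1 :=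
    Nat.ceil_lt_add_one (by positivity)
  refine ⟨⌈4 * Real.log n / p⌉₊, ?_, ?_, ?_⟩
  · have hdiv : 4 * Real.log n / p ≤ n / 25 := by
      rw [div_le_iff₀ hp]
      linarith
    have : 25 * ⌈4 * Real.log n / p⌉₊ < n + 25 := by
      exact_mod_cast (by linarith : 25 * (⌈4 * Real.log n / p⌉₊ : ℝ) < n + 25)
    lia
  · rw [mul_comm p, ← div_le_iff₀ hp]
    exact Nat.le_ceil _
  · calc p * ⌈4 * Real.log n / p⌉₊ ≤ p * (4 * Real.log n / p + 1) :=
          mul_le_mul_of_nonneg_left hlt.le hp.le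
      _ = 4 * Real.log n + p := by field_simp

theorem binomialRandom_real_sup_not_connected_or_AC_mul_le (p : I)
    (P : (pathGraph m).Copy G) (hm : 3 * Fintype.card V ≤ 4 * m)
    (hL : 1 ≤ Real.log (Fintype.card V))
    (hp : Real.log (Fintype.card V) ≤ p * (Fintype.card V : ℝ)) :
    G(V, p).real {H | ¬((G ⊔ H).Connected ∧
      (AC (G ⊔ H) : ℝ) * p ≤ 2800 * Real.log (Fintype.card V))} ≤
      Real.exp (1 + Real.log (Fintype.card V) - p * (Fintype.card V : ℝ)) +
        10100 * Real.log (Fintype.card V) ^ 2 * Real.exp (-(Real.log (Fintype.card V) / 2)) := by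
  have hV : Nonempty V := by
    by_contra hV
    rw [not_nonempty_iff] at hV
    norm_num [Fintype.card_eq_zero] at hL
  set n := Fintype.card V
  set L := Real.log n
  have hL2 : L ≤ L ^ 2 := le_self_pow₀ hL two_ne_zero
  obtain hsparse | hdense := le_or_gt (p * (n : ℝ)) (100 * L)
  · have hmn : (m : ℝ) ≤ n := by
      exact_mod_cast (by simpa using Fintype.card_le_of_embedding P.toEmbedding)
    refine (measureReal_mono (fun H ↦ mt (And.imp_right fun hH ↦ ?_)) (measure_ne_top _ _)).trans <|
      (binomialRandom_real_sup_not_connected_or_AC_le_of_sparse p P hm hp hsparse).trans ?_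
    · have hn : 1 ≤ (n : ℝ) := Nat.one_le_cast.2 Fintype.card_pos
      have hAC : (AC (G ⊔ H) : ℝ) ≤ 28 * n := by
        have : (AC (G ⊔ H) : ℝ) ≤ 22 * m + 6 := by exact_mod_cast hH
        linarith
      linarith [mul_le_mul_of_nonneg_right hAC p.2.1]
    · gcongr
      linarith
  · have hp0 : 0 < (p : ℝ) := pos_of_mul_pos_left (by linarith : 0 < p * (n : ℝ)) n.cast_nonneg
    obtain ⟨k, hkm, hk_ge, hk_le⟩ := exists_nat_four_mul_le_mul hL hm hp0 hdense
    refine (measureReal_mono (fun H ↦ mt (And.imp_right fun hH ↦ ?_)) (measure_ne_top _ _)).trans <|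
      (binomialRandom_real_sup_not_connected_or_AC_le_of_dense p P hm hkm hk_ge).trans ?_
    · have hAC : (AC (G ⊔ H) : ℝ) ≤ 28 * k + 2 := by exact_mod_cast hH
      linarith [mul_le_mul_of_nonneg_right hAC p.2.1, p.2.2]
    · have hexp : Real.exp (-(2 * L)) ≤ Real.exp (-(L / 2)) := Real.exp_le_exp.2 (by linarith)
      nlinarith [Real.exp_pos (1 + L - p * (n : ℝ)), Real.exp_pos (-(L / 2))]

end SecondRound

section Sprinkling

open MeasureTheory ProbabilityTheory unitInterval

theorem exists_sprinkling {n : ℕ} {p : I} (hp : 600 ≤ p * (n : ℝ)) :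
    ∃ a b : I, (1 - p : ℝ) = (1 - a) * (1 - b) ∧ a * (n : ℝ) = 300 ∧
      p * (n : ℝ) - 300 ≤ b * (n : ℝ) ∧ (p : ℝ) ≤ 2 * b := by
  have hn : 600 ≤ (n : ℝ) := hp.trans <| mul_le_of_le_one_left n.cast_nonneg p.2.2
  have hn0 : 0 < (n : ℝ) := by linarith
  let a : I := ⟨300 / n, by positivity, (div_le_one hn0).2 (by linarith)⟩
  have ha : a * (n : ℝ) = 300 := div_mul_cancel₀ _ hn0.ne'
  have hap : (a : ℝ) ≤ p := le_of_mul_le_mul_right (by linarith) hn0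
  have ha1 : 0 < 1 - (a : ℝ) := sub_pos.2 <| (div_lt_one hn0).2 (by linarith)
  let b : I := ⟨(p - a) / (1 - a), div_nonneg (sub_nonneg.2 hap) ha1.le,
    (div_le_one ha1).2 (sub_le_sub_right p.2.2 _)⟩
  have hab : (1 - a) * b = (p - a : ℝ) := mul_div_cancel₀ _ ha1.ne'
  have hsub : (p - a : ℝ) ≤ b := by nlinarith [mul_nonneg a.2.1 b.2.1]
  have hbn : p * (n : ℝ) - 300 ≤ b * (n : ℝ) := by nlinarith
  exact ⟨a, b, by linarith, ha, hbn, le_of_mul_le_mul_right (by linarith) hn0⟩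

theorem binomialRandom_real_not_connected_or_AC_le {V : Type*} [Fintype V] (p : I)
    (hL : 300 ≤ Real.log (Fintype.card V))
    (hp : 300 ≤ p * (Fintype.card V : ℝ) - Real.log (Fintype.card V)) :
    G(V, p).real {G | G.Connected ∧ (AC G : ℝ) ≤ 5600 * Real.log (Fintype.card V) / p}ᶜ ≤
      Real.exp (301 - (p * (Fintype.card V : ℝ) - Real.log (Fintype.card V))) +
        10101 * (Real.log (Fintype.card V) ^ 2 *
          Real.exp (-(Real.log (Fintype.card V) / 2))) := by
  set n := Fintype.card V
  set L := Real.log n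
  have hn : 0 < (n : ℝ) := by
    by_contra! h
    norm_num [L, h.antisymm n.cast_nonneg] at hL
  have hnL : L ≤ n - 1 := Real.log_le_sub_one_of_pos hn
  have hp0 : 0 < (p : ℝ) := pos_of_mul_pos_left (by linarith : 0 < p * (n : ℝ)) hn.le
  obtain ⟨a, b, hab, han, hbn, hpb⟩ := exists_sprinkling (n := n) (p := p) (by linarith)
  have hpath : G(V, a).real {G | ∃ m, Nonempty ((pathGraph m).Copy G) ∧ 3 * n ≤ 4 * m}ᶜ ≤
      Real.exp (-n) :=
    binomialRandom_real_not_exists_long_path_le a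
      (by exact_mod_cast (by linarith : (40 : ℝ) ≤ n)) han.ge
  refine (binomialRandom_real_compl_le_of_sprinkling hab
    (δ := Real.exp (1 + L - b * (n : ℝ)) + 10100 * L ^ 2 * Real.exp (-(L / 2))) (by positivity)
    ?_).trans <| (add_le_add_left hpath _).trans ?_
  · rintro G ⟨m, ⟨P⟩, hm⟩
    refine (measureReal_mono (fun H ↦ mt (And.imp_right fun hH ↦ ?_)) (measure_ne_top _ _)).trans
      (binomialRandom_real_sup_not_connected_or_AC_mul_le b P hm (by linarith) (by linarith))
    rw [le_div_iff₀ hp0]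
    linarith [mul_le_mul_of_nonneg_left hpb (AC (G ⊔ H)).cast_nonneg (α := ℝ)]
  · have hisolated : Real.exp (1 + L - b * (n : ℝ)) ≤ Real.exp (301 - (p * (n : ℝ) - L)) :=
      Real.exp_le_exp.2 (by linarith)
    have hlong : Real.exp (-n) ≤ L ^ 2 * Real.exp (-(L / 2)) :=
      (Real.exp_le_exp.2 (by linarith)).trans <|
        le_mul_of_one_le_left (Real.exp_pos _).le (one_le_pow₀ (by linarith))
    linarith

end Sprinkling

theorem tendsto_pow_mul_exp_neg_half_atTop_nhds_zero (k : ℕ) :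
    Filter.Tendsto (fun x : ℝ ↦ x ^ k * Real.exp (-(x / 2))) Filter.atTop (nhds 0) := by
  have hhalf := ((Real.tendsto_pow_mul_exp_neg_atTop_nhds_zero k).comp
    (Filter.tendsto_id.atTop_div_const two_pos)).const_mul (2 ^ k)
  rw [mul_zero] at hhalf
  refine hhalf.congr fun x ↦ ?_
  simp only [Function.comp_apply, id_eq]
  rw [← mul_assoc, ← mul_pow, mul_div_cancel₀ x two_ne_zero]

theorem AC_gnp_upper_above_hamiltonicity_general :
    ∃ C : ℝ, 0 < C ∧ ∀ p : ℕ → ℝ,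
      (∀ n : ℕ, 0 ≤ p n ∧ p n ≤ 1) →
      Filter.Tendsto (fun n : ℕ => p n * n - Real.log n) Filter.atTop Filter.atTop →
      Filter.Tendsto
        (fun n : ℕ => gnpProb n (p n) (fun G : SimpleGraph (Fin n) =>
          G.Connected ∧ (AC G : ℝ) ≤ C * Real.log n / p n))
        Filter.atTop (nhds 1) := by
  refine ⟨5600, by norm_num, fun p hp hlim ↦ ?_⟩
  have hlog : Filter.Tendsto (fun n : ℕ ↦ Real.log n) Filter.atTop Filter.atTop :=
    Real.tendsto_log_atTop.comp tendsto_natCast_atTop_atTop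
  have hfail : Filter.Tendsto (fun n : ℕ ↦ Real.exp (301 - (p n * n - Real.log n)) +
      10101 * (Real.log n ^ 2 * Real.exp (-(Real.log n / 2)))) Filter.atTop (nhds 0) := by
    have hexp := Real.tendsto_exp_atBot.comp (Filter.tendsto_atBot_add_const_left _ 301
      (Filter.tendsto_neg_atTop_atBot.comp hlim))
    have hpow := (tendsto_pow_mul_exp_neg_half_atTop_nhds_zero 2).comp hlog
    simpa [sub_eq_add_neg] using! hexp.add (hpow.const_mul 10101)
  have hprob (n : ℕ) := gnpProb_eq_binomialRandom_real n ⟨p n, hp n⟩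
  refine tendsto_of_tendsto_of_tendsto_of_le_of_le' (by simpa using hfail.const_sub 1)
    tendsto_const_nhds ?_ (.of_forall fun n ↦ hprob n _ ▸ MeasureTheory.measureReal_le_one)
  filter_upwards [hlog.eventually_ge_atTop 300, hlim.eventually_ge_atTop 300] with n hL hw
  have hbound := binomialRandom_real_not_connected_or_AC_le (V := Fin n) ⟨p n, hp n⟩
    (by simpa using hL) (by simpa using hw)
  rw [MeasureTheory.probReal_compl_eq_one_sub .of_discrete] at hbound
  simp only [Fintype.card_fin] at hbound
  rw [hprob]
  linarith

/-- There is a constant `C > 0` such that: whenever `p(n)·n − log n − log log n → ∞` and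
`0 ≤ p(n) ≤ 1` for all `n`, a.a.s. `G ∈ G(n, p(n))` is connected and satisfies
`AC(G) ≤ C log n / p(n)`. -/
theorem AC_gnp_upper_above_hamiltonicity :
    ∃ C : ℝ, 0 < C ∧ ∀ p : ℕ → ℝ,
      (∀ n : ℕ, 0 ≤ p n ∧ p n ≤ 1) →
      Filter.Tendsto (fun n : ℕ => p n * n - Real.log n - Real.log (Real.log n))
        Filter.atTop Filter.atTop →
      Filter.Tendsto
        (fun n : ℕ => gnpProb n (p n) (fun G : SimpleGraph (Fin n) =>
          G.Connected ∧ (AC G : ℝ) ≤ C * Real.log n / p n))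
        Filter.atTop (nhds 1) := by
  obtain ⟨C, hC, hgeneral⟩ := AC_gnp_upper_above_hamiltonicity_general
  refine ⟨C, hC, fun p hp hlim ↦ hgeneral p hp (Filter.tendsto_atTop_mono' _ ?_ hlim)⟩
  have hlog := Real.tendsto_log_atTop.comp (tendsto_natCast_atTop_atTop (R := ℝ))
  filter_upwards [hlog.eventually_ge_atTop 1] with n hn
  exact sub_le_self _ (Real.log_nonneg hn)
end
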